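/- arXiv:1912.12108 — 2 statements merged into one kernel-verified Lean document; each statement's English description precedes it below -/
import Mathlib

section
/- Let n ≥ 1 and let V be a positive integer. Then the set of tuples (B_1, …, B_n) of lattice polyhedra in ℝ^n that are minimal with mixed volume V is finite. -/
/-!
Two facts carry the proof.

*Monotonicity.* On convenient tuples (every polyhedron meets every coordinate axis, equivalently all
covolumes are finite) the mixed volume is nonnegative and does not increase when the polyhedra grow.
Both follow from `covol_alternating_sum_nonneg`: for `A ⊆ A'` the alternating sum over `L ⊆ K` of the
volumes of the differences of `A' + ∑ l ∈ L, B l` and `A + ∑ l ∈ L, B l` is nonnegative. The polyhedra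
are epigraphs of conjugates of piecewise linear convex functions of the slope `v`, which are
approximated by log-sum-exp functions. For smooth strictly convex `f0 < f1`, interpolating from `f0`
to `f1` and parametrising by the slope gives the region between the epigraphs the volume
`∫ t in 0..1, ∫ v, (f1 - f0) * det (Hess ((1 - t) f0 + t f1))`
(`volume_conjEpi_diff`). Minkowski sums of polyhedra become sums of functions, so the claim reduces to
the nonnegativity of an alternating sum of determinants of positive semidefinite matrices
(`det_alternating_sum_nonneg`), which follows from the Cauchy–Binet formula.

*Well-quasi-order.* A lattice polyhedron is determined by its lattice points, an up-set of `ℕ^n`, and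
the up-sets of `ℕ^n` are well-quasi-ordered by reverse inclusion (`upperSet_wellQuasiOrderedLE`, by
Higman's lemma). So every antichain of tuples is finite.

In `MV` infinite covolumes count as `0`. Hence `MV B` is, up to a sign depending only on the set `J`
of indices of convenient members, the mixed volume of the members indexed by `J` (`MV_eq_mixed`). For
fixed `J` the minimal tuples with mixed volume `V > 0` form an antichain: if `B ≤ B'` are distinct,
some vertex of some `B' i` may be added to `B i` without leaving `B'`, and by monotonicity the mixed
volume stays at least `V`, contradicting minimality of `B` (`eq_of_isMinimalTuple`). As there are
finitely many `J`, the theorem follows.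
-/

open Pointwise MeasureTheory

noncomputable section

/-- The positive (closed) orthant in `ℝ^n`. -/
def orthant (n : ℕ) : Set (Fin n → ℝ) := {x | ∀ i, 0 ≤ x i}

/-- The standard basis vector `e m`. -/
def stdVec {n : ℕ} (m : Fin n) : Fin n → ℝ := Pi.single m 1

/-- A lattice polyhedron: the Minkowski sum of the convex hull of a finite nonempty set of
points with nonnegative integer coordinates and the positive orthant. -/
def IsLatticePolyhedron {n : ℕ} (B : Set (Fin n → ℝ)) : Prop :=
  ∃ F : Finset (Fin n → ℝ), F.Nonempty ∧
    (∀ p ∈ F, ∀ i, ∃ m : ℕ, p i = (m : ℝ)) ∧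
    B = convexHull ℝ (↑F) + orthant n

/-- The relative mixed volume of the pairs `(C, B 1), …, (C, B n)`. -/
def MV {n : ℕ} (B : Fin n → Set (Fin n → ℝ)) : ℝ :=
  ∑ I ∈ Finset.univ.powerset.filter (fun I : Finset (Fin n) => I.Nonempty),
    (-1 : ℝ) ^ (n - I.card) * (volume (orthant n \ ∑ i ∈ I, B i)).toReal

/-- The polyhedron `C_{a_1,…,a_n} = conv({a_1 e_1, …, a_n e_n}) + C`. -/
def Caf {n : ℕ} (a : Fin n → ℝ) : Set (Fin n → ℝ) :=
  convexHull ℝ (Set.range fun i : Fin n => Pi.single i (a i)) + orthant n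

/-- A tuple of polyhedra is minimal with mixed volume `V`. -/
def IsMinimalTuple {n : ℕ} (B : Fin n → Set (Fin n → ℝ)) (V : ℝ) : Prop :=
  MV B = V ∧ ∀ i : Fin n, ∀ δ : Fin n → ℝ,
    (∀ j, ∃ m : ℤ, δ j = (m : ℝ)) → δ ∈ orthant n → δ ∉ B i →
    MV (Function.update B i (convexHull ℝ (B i ∪ {δ}))) < V

/-! ### Alternating sums of determinants -/

/-- A weighted form of the Cauchy–Binet formula, with the sum over all (not only increasing) choice
functions. The weights `a` enter only through the monomials `∏ i, a (s i)`. -/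
theorem det_weighted_gram {d : ℕ} {κ : Type*} [Fintype κ] [DecidableEq κ] (a : κ → ℝ)
    (w : κ → Fin d → ℝ) :
    (d.factorial : ℝ) * (∑ j, a j • Matrix.vecMulVec (w j) (w j)).det =
      ∑ s : Fin d → κ, (∏ i, a (s i)) * (Matrix.of fun i => w (s i)).det ^ 2 := by
  have h1 : (∑ j, a j • Matrix.vecMulVec (w j) (w j)).det =
      ∑ s : Fin d → κ, (∏ i, a (s i)) * (∏ i, w (s i) i) * (Matrix.of fun i => w (s i)).det := by
    have := (Matrix.detRowAlternating (n := Fin d) (R := ℝ)).toMultilinearMap.map_sum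
      (fun (i : Fin d) (j : κ) => (a j * w j i) • w j)
    have h2 : (∑ j, a j • Matrix.vecMulVec (w j) (w j)) =
        (fun i : Fin d => ∑ j, (a j * w j i) • w j : Matrix (Fin d) (Fin d) ℝ) := by
      ext i c
      simp [Matrix.sum_apply, Matrix.vecMulVec_apply, mul_assoc]
    rw [h2]
    refine this.trans (Finset.sum_congr rfl fun s _ => ?_)
    rw [MultilinearMap.map_smul_univ, Finset.prod_mul_distrib]
    rfl
  have h3 : ∀ π : Equiv.Perm (Fin d), (∑ j, a j • Matrix.vecMulVec (w j) (w j)).det =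
      ∑ s : Fin d → κ, (∏ i, a (s i)) * (Equiv.Perm.sign π * ∏ i, w (s (π i)) i) *
        (Matrix.of fun i => w (s i)).det := by
    intro π
    rw [h1]
    refine Fintype.sum_equiv (Equiv.arrowCongr π (Equiv.refl κ)) _ _ fun s => ?_
    have e1 : (Matrix.of fun i => w (s (π.symm i))).det =
        Equiv.Perm.sign π * (Matrix.of fun i => w (s i)).det := by
      have := Matrix.det_permute π.symm (Matrix.of fun i => w (s i))
      rw [Equiv.Perm.sign_symm] at this
      exact this
    have e2 : ∏ i, a (s (π.symm i)) = ∏ i, a (s i) := Equiv.prod_comp π.symm (fun i => a (s i))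
    simp only [Equiv.arrowCongr_apply, Function.comp_def, Equiv.refl_apply,
      Equiv.symm_apply_apply]
    rw [e1, e2]
    have e3 : ((Equiv.Perm.sign π : ℤ) : ℝ) * ((Equiv.Perm.sign π : ℤ) : ℝ) = 1 := by
      rcases Int.units_eq_one_or (Equiv.Perm.sign π) with h | h <;> simp [h]
    linear_combination (- (∏ i, a (s i)) * (∏ i, w (s i) i) * (Matrix.of fun i => w (s i)).det) * e3
  have h4 : (d.factorial : ℝ) * (∑ j, a j • Matrix.vecMulVec (w j) (w j)).det =
      ∑ π : Equiv.Perm (Fin d), (∑ j, a j • Matrix.vecMulVec (w j) (w j)).det := by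
    simp [Finset.card_univ, Fintype.card_perm]
  rw [h4, Finset.sum_congr rfl fun π _ => h3 π, Finset.sum_comm]
  refine Finset.sum_congr rfl fun s _ => ?_
  rw [← Finset.sum_mul, ← Finset.mul_sum, sq, ← mul_assoc]
  congr 2
  rw [Matrix.det_apply']
  rfl

/-- The sum is `1` if `T = K` and `0` otherwise. -/
theorem sum_powerset_neg_one_indicator_nonneg {ι : Type*} [DecidableEq ι] (K T : Finset ι) :
    (0 : ℝ) ≤ ∑ L ∈ K.powerset, (-1 : ℝ) ^ (K \ L).card * (if T ⊆ L then 1 else 0) := by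
  by_cases hT : T ⊆ K
  · have h := Finset.prod_add (fun _ : ι => (1 : ℝ)) (fun l => if l ∈ T then 0 else -1) K
    have h2 : ∑ L ∈ K.powerset, (-1 : ℝ) ^ (K \ L).card * (if T ⊆ L then 1 else 0) =
        ∏ l ∈ K, ((1 : ℝ) + if l ∈ T then 0 else -1) := by
      rw [h]
      refine Finset.sum_congr rfl fun L hL => ?_
      rw [Finset.prod_const_one, one_mul]
      split_ifs with hTL
      · rw [mul_one, ← Finset.prod_const]
        refine Finset.prod_congr rfl fun l hl => ?_
        rw [if_neg fun hlT => (Finset.mem_sdiff.1 hl).2 (hTL hlT)]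
      · obtain ⟨l, hlT, hlL⟩ := Finset.not_subset.1 hTL
        rw [mul_zero, Finset.prod_eq_zero (Finset.mem_sdiff.2 ⟨hT hlT, hlL⟩)]
        simp [hlT]
    rw [h2]
    refine Finset.prod_nonneg fun l _ => ?_
    split_ifs <;> norm_num
  · refine le_of_eq (Finset.sum_eq_zero fun L hL => ?_).symm
    rw [if_neg fun h => hT (h.trans (Finset.mem_powerset.1 hL)), mul_zero]

/-- Write each matrix as a sum of rank one matrices. By `det_weighted_gram` the determinants are
combinations of squares, in which the square attached to `s` occurs for exactly those `L` that contain
every group met by `s`. -/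
theorem det_alternating_sum_nonneg {d : ℕ} {ι : Type*} [Fintype ι] [DecidableEq ι]
    (P : Matrix (Fin d) (Fin d) ℝ) (Q : ι → Matrix (Fin d) (Fin d) ℝ) (hP : P.PosSemidef)
    (hQ : ∀ l, (Q l).PosSemidef) (K : Finset ι) :
    0 ≤ ∑ L ∈ K.powerset, (-1 : ℝ) ^ (K \ L).card * (P + ∑ l ∈ L, Q l).det := by
  classical
  obtain ⟨m0, v0, h0⟩ := Matrix.posSemidef_iff_eq_sum_vecMulVec.1 hP
  choose m v hv using fun l => Matrix.posSemidef_iff_eq_sum_vecMulVec.1 (hQ l)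
  simp only [star_trivial] at h0 hv
  let κ := Fin m0 ⊕ (Σ l, Fin (m l))
  let w : κ → Fin d → ℝ := Sum.elim v0 (fun x => v x.1 x.2)
  let a : Finset ι → κ → ℝ := fun L => Sum.elim (fun _ => 1) (fun x => if x.1 ∈ L then 1 else 0)
  have hsum : ∀ L : Finset ι, P + ∑ l ∈ L, Q l = ∑ j, a L j • Matrix.vecMulVec (w j) (w j) := by
    intro L
    rw [Fintype.sum_sum_type, Fintype.sum_sigma, h0]
    congr 1
    · simp [a, w]
    · simp only [a, w, Sum.elim_inr, ite_smul, one_smul, zero_smul]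
      rw [← Finset.sum_subset (Finset.subset_univ L)]
      · refine Finset.sum_congr rfl fun l hl => ?_
        simp only [if_pos hl]
        exact hv l
      · intro l _ hl
        simp [hl]
  -- The set of groups met by the choice function `s`.
  let T : (Fin d → κ) → Finset ι := fun s =>
    Finset.univ.filter fun l => ∃ i y, s i = Sum.inr ⟨l, y⟩
  have hprod : ∀ L s, ∏ i, a L (s i) = if T s ⊆ L then 1 else 0 := by
    intro L s
    split_ifs with h
    · refine Finset.prod_eq_one fun i _ => ?_
      rcases hs : s i with x | ⟨l, y⟩
      · simp [a]
      · have : l ∈ L := h (by simp only [T, Finset.mem_filter_univ]; exact ⟨i, y, hs⟩)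
        simp [a, this]
    · obtain ⟨l, hl, hlL⟩ := Finset.not_subset.1 h
      simp only [T, Finset.mem_filter_univ] at hl
      obtain ⟨i, y, hs⟩ := hl
      exact Finset.prod_eq_zero (Finset.mem_univ i) (by simp [hs, a, hlL])
  have hfac : (0 : ℝ) < d.factorial := by positivity
  refine nonneg_of_mul_nonneg_right ?_ hfac
  rw [Finset.mul_sum]
  have : ∀ L ∈ K.powerset, (d.factorial : ℝ) * ((-1 : ℝ) ^ (K \ L).card * (P + ∑ l ∈ L, Q l).det) =
      ∑ s : Fin d → κ, ((-1 : ℝ) ^ (K \ L).card * if T s ⊆ L then 1 else 0) *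
        (Matrix.of fun i => w (s i)).det ^ 2 := by
    intro L _
    rw [mul_left_comm, hsum, det_weighted_gram, Finset.mul_sum]
    simp only [hprod, mul_assoc]
  rw [Finset.sum_congr rfl this, Finset.sum_comm]
  refine Finset.sum_nonneg fun s _ => ?_
  rw [← Finset.sum_mul]
  exact mul_nonneg (sum_powerset_neg_one_indicator_nonneg K (T s)) (sq_nonneg _)

/-! ### Up-sets of `ℕ^d` are well-quasi-ordered -/

/-- The matching given by `SublistForall₂` moves positions only to the right. -/
theorem sublistForall₂_getElem {α : Type*} {r : α → α → Prop} {l l' : List α}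
    (h : List.SublistForall₂ r l l') :
    ∀ k (hk : k < l.length), ∃ j, ∃ hj : j < l'.length, k ≤ j ∧ r l[k] l'[j] := by
  induction h with
  | nil => intro k hk; simp at hk
  | cons hr _ ih =>
    intro k hk
    cases k with
    | zero => exact ⟨0, by simp, le_rfl, by simpa using hr⟩
    | succ k =>
      obtain ⟨j, hj, hkj, h⟩ := ih k (by simpa using hk)
      exact ⟨j + 1, by simpa using hj, by omega, by simpa using h⟩
  | cons_right _ ih =>
    intro k hk
    obtain ⟨j, hj, hkj, h⟩ := ih k hk
    exact ⟨j + 1, by simpa using hj, by omega, by simpa using h⟩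

/-- The slice of an upper set of `ℕ^(d+1)` at first coordinate `k`. -/
def upperSlice {d : ℕ} (U : UpperSet (Fin (d + 1) → ℕ)) (k : ℕ) : UpperSet (Fin d → ℕ) where
  carrier := {x | (Fin.cons k x : Fin (d + 1) → ℕ) ∈ U}
  upper' := by
    intro x y hxy hx
    exact U.upper (Fin.cons_le_cons.2 ⟨le_rfl, hxy⟩) hx

theorem upperSlice_antitone {d : ℕ} (U : UpperSet (Fin (d + 1) → ℕ)) : Antitone (upperSlice U) := by
  intro k k' hk x hx
  exact U.upper (Fin.cons_le_cons.2 ⟨hk, le_rfl⟩) hx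

/-- Upper sets of `ℕ^d` are well-quasi-ordered by reverse inclusion (which is the order on
`UpperSet`). An upper set of `ℕ^(d+1)` is an eventually constant chain of slices in `ℕ^d`; its
slices before stabilisation form a word to which Higman's lemma applies. -/
theorem upperSet_wellQuasiOrderedLE (d : ℕ) : WellQuasiOrderedLE (UpperSet (Fin d → ℕ)) := by
  induction d with
  | zero => exact Finite.to_wellQuasiOrderedLE
  | succ d ih =>
    have hst : ∀ U : UpperSet (Fin (d + 1) → ℕ), ∃ N, ∀ m, N ≤ m →
        upperSlice U N = upperSlice U m := fun U =>
      WellFoundedLT.antitone_chain_condition (upperSlice_antitone U)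
    choose N hN using hst
    have hH : WellQuasiOrdered (List.SublistForall₂ (α := UpperSet (Fin d → ℕ)) (· ≤ ·)) := by
      have := Set.PartiallyWellOrderedOn.partiallyWellOrderedOn_sublistForall₂ (· ≤ ·)
        (Set.partiallyWellOrderedOn_univ_iff.2 ih.wqo)
      simpa [Set.partiallyWellOrderedOn_univ_iff] using this
    have hP := ih.wqo.prod hH
    refine ⟨fun f => ?_⟩
    obtain ⟨m, n, hmn, h1, h2⟩ := hP fun k =>
      (upperSlice (f k) (N (f k)), (List.range (N (f k))).map (upperSlice (f k)))
    refine ⟨m, n, hmn, ?_⟩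
    have key : ∀ k, upperSlice (f m) k ≤ upperSlice (f n) k := by
      intro k
      rcases lt_or_ge k (N (f m)) with hk | hk
      · obtain ⟨j, hj, hkj, h⟩ := sublistForall₂_getElem h2 k (by simpa using hk)
        simp only [List.getElem_map, List.getElem_range] at h
        exact h.trans (upperSlice_antitone _ hkj)
      · rw [← hN (f m) k hk]
        refine h1.trans ?_
        rcases le_total k (N (f n)) with h | h
        · exact upperSlice_antitone _ h
        · exact (hN _ _ h).le
    intro x hx
    have := key (x 0) (show Fin.tail x ∈ upperSlice (f n) (x 0) from ?_)
    · have h3 : (Fin.cons (x 0) (Fin.tail x) : Fin (d + 1) → ℕ) ∈ f m := this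
      rwa [Fin.cons_self_tail] at h3
    · show (Fin.cons (x 0) (Fin.tail x) : Fin (d + 1) → ℕ) ∈ f n
      rwa [Fin.cons_self_tail]

/-! ### Smooth convex potentials -/

/-- The linear functional on `ℝ^d` with coefficient vector `a`. -/
noncomputable def dotL {d : ℕ} (a : Fin d → ℝ) : (Fin d → ℝ) →L[ℝ] ℝ :=
  ∑ i, a i • ContinuousLinearMap.proj i

theorem dotL_apply {d : ℕ} (a x : Fin d → ℝ) : dotL a x = ∑ i, a i * x i := by
  simp [dotL]

/-- `f` is a strictly convex `C²` function on `ℝ^d` with gradient `g` and positive definite Hessian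
`H`, whose gradient lies in the open cube `(0, c)^d` and which stays within bounded distance of the
support function `v ↦ c ∑ max (v i) 0` of that cube. -/
structure IsPotential {d : ℕ} (c : ℝ) (f : (Fin d → ℝ) → ℝ) (g : (Fin d → ℝ) → (Fin d → ℝ))
    (H : (Fin d → ℝ) → Matrix (Fin d) (Fin d) ℝ) : Prop where
  hf : ∀ v, HasFDerivAt f (dotL (g v)) v
  hg : ∀ v i, HasFDerivAt (fun w => g w i) (dotL (H v i)) v
  pos : ∀ v, (H v).PosDef
  range : ∀ v i, 0 < g v i ∧ g v i < c
  bound : ∃ K, ∀ v, |f v - c * ∑ i, max (v i) 0| ≤ K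

namespace IsPotential

variable {d : ℕ} {c c' : ℝ} {f f' : (Fin d → ℝ) → ℝ} {g g' : (Fin d → ℝ) → (Fin d → ℝ)}
  {H H' : (Fin d → ℝ) → Matrix (Fin d) (Fin d) ℝ}

theorem comb (h : IsPotential c f g H) (h' : IsPotential c' f' g' H') {s t : ℝ} (hs : 0 ≤ s)
    (ht : 0 ≤ t) (hst : 0 < s + t) :
    IsPotential (s * c + t * c') (fun v => s * f v + t * f' v) (fun v => s • g v + t • g' v)
      (fun v => s • H v + t • H' v) where
  hf v := by
    refine (((h.hf v).const_mul s).add ((h'.hf v).const_mul t)).congr_fderiv ?_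
    ext x
    simp [dotL_apply, Finset.mul_sum, Finset.sum_add_distrib, add_mul, mul_assoc]
  hg v i := by
    refine (((h.hg v i).const_mul s).add ((h'.hg v i).const_mul t)).congr_fderiv ?_
    ext x
    simp [dotL_apply, Finset.mul_sum, Finset.sum_add_distrib, add_mul, mul_assoc]
  pos v := by
    rcases hs.eq_or_lt with rfl | hs
    · have : 0 < t := by linarith
      simpa using (h'.pos v).smul this
    · exact ((h.pos v).smul hs).add_posSemidef ((h'.pos v).posSemidef.smul ht)
  range v i := by
    have h1 := h.range v i
    have h2 := h'.range v i
    simp only [Pi.add_apply, Pi.smul_apply, smul_eq_mul]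
    rcases hs.eq_or_lt with rfl | hs
    · have : 0 < t := by linarith
      constructor <;> nlinarith
    · constructor <;> nlinarith
  bound := by
    obtain ⟨K, hK⟩ := h.bound
    obtain ⟨K', hK'⟩ := h'.bound
    refine ⟨s * K + t * K', fun v => ?_⟩
    have e : s * f v + t * f' v - (s * c + t * c') * ∑ i, max (v i) 0 =
      s * (f v - c * ∑ i, max (v i) 0) + t * (f' v - c' * ∑ i, max (v i) 0) := by ring
    rw [e]
    refine (abs_add_le _ _).trans ?_
    rw [abs_mul, abs_mul, abs_of_nonneg hs, abs_of_nonneg ht]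
    exact add_le_add (mul_le_mul_of_nonneg_left (hK v) hs) (mul_le_mul_of_nonneg_left (hK' v) ht)

theorem add (h : IsPotential c f g H) (h' : IsPotential c' f' g' H') :
    IsPotential (c + c') (fun v => f v + f' v) (fun v => g v + g' v) (fun v => H v + H' v) := by
  simpa using h.comb h' zero_le_one zero_le_one (by norm_num)

theorem add_sum {ι : Type*} {F : ι → (Fin d → ℝ) → ℝ} {G : ι → (Fin d → ℝ) → (Fin d → ℝ)}
    {Q : ι → (Fin d → ℝ) → Matrix (Fin d) (Fin d) ℝ} (h : IsPotential c f g H)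
    (hF : ∀ l, IsPotential c (F l) (G l) (Q l)) (L : Finset ι) :
    IsPotential ((L.card + 1) * c) (fun v => f v + ∑ l ∈ L, F l v) (fun v => g v + ∑ l ∈ L, G l v)
      (fun v => H v + ∑ l ∈ L, Q l v) := by
  classical
  induction L using Finset.induction_on with
  | empty => simpa using h
  | insert a L ha ih =>
    convert ih.add (hF a) using 1
    · rw [Finset.card_insert_of_notMem ha]; push_cast; ring
    all_goals
      ext v : 1
      rw [Finset.sum_insert ha]
      abel

theorem add_const (h : IsPotential c f g H) (a : ℝ) : IsPotential c (fun v => f v + a) g H where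
  hf v := (h.hf v).add_const a
  hg := h.hg
  pos := h.pos
  range := h.range
  bound := by
    obtain ⟨K, hK⟩ := h.bound
    refine ⟨K + |a|, fun v => ?_⟩
    have e : f v + a - c * ∑ i, max (v i) 0 = (f v - c * ∑ i, max (v i) 0) + a := by ring
    rw [e]
    exact (abs_add_le _ _).trans (add_le_add_left (hK v) _)

/-- The first-order characterisation of strict convexity. -/
theorem gradient_lt (h : IsPotential c f g H) {v w : Fin d → ℝ} (hvw : v ≠ w) :
    f v + ∑ i, g v i * (w i - v i) < f w := by
  let l : ℝ → Fin d → ℝ := fun s => v + s • (w - v)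
  have hl : ∀ s, HasDerivAt l (w - v) s := by
    intro s
    have := ((hasDerivAt_id s).smul_const (w - v)).const_add v
    rwa [one_smul] at this
  have h1 : ∀ s, HasDerivAt (fun s => f (l s)) (∑ i, g (l s) i * (w i - v i)) s := by
    intro s
    have := (h.hf (l s)).comp_hasDerivAt s (hl s)
    simp only [dotL_apply, Pi.sub_apply] at this
    exact this
  have h2 : ∀ s, HasDerivAt (fun s => ∑ i, g (l s) i * (w i - v i))
      (∑ i, (∑ j, H (l s) i j * (w j - v j)) * (w i - v i)) s := by
    intro s
    refine HasDerivAt.fun_sum fun i _ => ?_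
    have := ((h.hg (l s) i).comp_hasDerivAt s (hl s)).mul_const (w i - v i)
    simpa [dotL_apply] using this
  have hx : w - v ≠ 0 := sub_ne_zero.2 hvw.symm
  have hmono : StrictMono fun s => ∑ i, g (l s) i * (w i - v i) := by
    refine strictMono_of_deriv_pos fun s => ?_
    rw [(h2 s).deriv]
    have := (h.pos (l s)).dotProduct_mulVec_pos hx
    simp only [star_trivial, dotProduct, Matrix.mulVec, Pi.sub_apply] at this
    simpa only [mul_comm] using this
  obtain ⟨ξ, hξ, he⟩ := exists_hasDerivAt_eq_slope (fun s => f (l s)) _ zero_lt_one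
    (fun s _ => (h1 s).continuousAt.continuousWithinAt) (fun s _ => h1 s)
  have h3 := hmono hξ.1
  have e0 : l 0 = v := by simp [l]
  have e1 : l 1 = w := by simp [l]
  simp only [e0, e1] at h3 he
  rw [he] at h3
  simp at h3
  linarith

theorem gradient_le (h : IsPotential c f g H) (v w : Fin d → ℝ) :
    f v + ∑ i, g v i * (w i - v i) ≤ f w := by
  rcases eq_or_ne v w with rfl | hvw
  · simp
  · exact (h.gradient_lt hvw).le

theorem injective (h : IsPotential c f g H) : Function.Injective g := by
  intro v w hvw
  by_contra hne
  have h1 := h.gradient_lt hne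
  have h2 := h.gradient_lt (Ne.symm hne)
  have : ∑ i, g v i * (w i - v i) = - ∑ i, g w i * (v i - w i) := by
    rw [hvw, ← Finset.sum_neg_distrib]
    exact Finset.sum_congr rfl fun i _ => by ring
  linarith

theorem continuous (h : IsPotential c f g H) : Continuous f :=
  continuous_iff_continuousAt.2 fun v => (h.hf v).continuousAt

/-- The gradient map is onto the open cube, by minimising the coercive function
`w ↦ f w - ⟨w, y⟩`. -/
theorem exists_gradient (h : IsPotential c f g H) {y : Fin d → ℝ} (hy : ∀ i, 0 < y i ∧ y i < c) :
    ∃ v, g v = y := by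
  obtain ⟨K, hK⟩ := h.bound
  obtain ⟨a, ha, ha1⟩ := Pi.exists_forall_pos_add_lt (x := fun _ => 0) (y := y) fun i => (hy i).1
  obtain ⟨b, hb, hb1⟩ := Pi.exists_forall_pos_add_lt (x := y) (y := fun _ => c) fun i => (hy i).2
  have hm : 0 < min a b := lt_min ha hb
  have hco : ∀ w : Fin d → ℝ, min a b * ‖w‖ - K ≤ f w - ∑ i, y i * w i := by
    intro w
    have h1 := (abs_le.1 (hK w)).1
    have h2 : min a b * ‖w‖ ≤ ∑ i, (c * max (w i) 0 - y i * w i) := by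
      have hterm : ∀ i, min a b * |w i| ≤ c * max (w i) 0 - y i * w i := by
        intro i
        have q1 := ha1 i
        have q2 := hb1 i
        have q3 := min_le_left a b
        have q4 := min_le_right a b
        rcases le_total 0 (w i) with hw | hw
        · rw [abs_of_nonneg hw, max_eq_left hw]; nlinarith
        · rw [abs_of_nonpos hw, max_eq_right hw]; nlinarith
      have h3 : ‖w‖ ≤ ∑ i, |w i| := by
        refine (pi_norm_le_iff_of_nonneg (Finset.sum_nonneg fun i _ => abs_nonneg _)).2 fun i => ?_
        exact Finset.single_le_sum (f := fun i => |w i|) (fun i _ => abs_nonneg _)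
          (Finset.mem_univ i)
      calc min a b * ‖w‖ ≤ min a b * ∑ i, |w i| := mul_le_mul_of_nonneg_left h3 hm.le
        _ = ∑ i, min a b * |w i| := Finset.mul_sum _ _ _
        _ ≤ _ := Finset.sum_le_sum fun i _ => hterm i
    rw [Finset.sum_sub_distrib, ← Finset.mul_sum] at h2
    linarith
  have htend : Filter.Tendsto (fun w => f w - ∑ i, y i * w i) (Filter.cocompact (Fin d → ℝ))
      Filter.atTop := by
    refine Filter.tendsto_atTop_mono hco ?_
    exact Filter.tendsto_atTop_add_const_right _ (-K)
      ((tendsto_norm_cocompact_atTop (E := Fin d → ℝ)).const_mul_atTop hm)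
  have hcont : Continuous fun w => f w - ∑ i, y i * w i :=
    h.continuous.sub (by fun_prop)
  obtain ⟨v, hv⟩ := hcont.exists_forall_le htend
  refine ⟨v, ?_⟩
  have hder : HasFDerivAt (fun w => f w - ∑ i, y i * w i) (dotL (g v) - dotL y) v := by
    refine (h.hf v).sub ?_
    have := (dotL y).hasFDerivAt (x := v)
    exact this.congr_of_eventuallyEq (Filter.Eventually.of_forall fun w => (dotL_apply y w).symm)
  have h0 := IsLocalMin.hasFDerivAt_eq_zero (Filter.Eventually.of_forall hv) hder
  ext i
  have := congrArg (fun A : (Fin d → ℝ) →L[ℝ] ℝ => A (Pi.single i 1)) h0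
  simp [dotL_apply, Pi.single_apply] at this
  linarith

end IsPotential

/-! ### The region between two conjugates, parametrised by slope -/

/-- The epigraph of the convex conjugate of `f`; the epigraph variable is the coordinate `0`. -/
def conjEpi {d : ℕ} (f : (Fin d → ℝ) → ℝ) : Set (Fin (d + 1) → ℝ) :=
  {p | ∀ v : Fin d → ℝ, ∑ i, v i * p i.succ - f v ≤ p 0}

/-- The cylinder over the open cube `(0, c)^d`. -/
def cyl (d : ℕ) (c : ℝ) : Set (Fin (d + 1) → ℝ) := {p | ∀ i : Fin d, 0 < p i.succ ∧ p i.succ < c}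

/-- The set of parameters `(t, v)` with `0 < t ≤ 1`. -/
def slab (d : ℕ) : Set (Fin (d + 1) → ℝ) := {u | u 0 ∈ Set.Ioc (0 : ℝ) 1}

theorem measurableSet_slab (d : ℕ) : MeasurableSet (slab d) :=
  measurableSet_Ioc.preimage (measurable_pi_apply 0)

theorem isClosed_conjEpi {d : ℕ} (f : (Fin d → ℝ) → ℝ) : IsClosed (conjEpi f) := by
  rw [conjEpi, Set.ofPred_forall]
  refine isClosed_iInter fun v => isClosed_le (by fun_prop) (by fun_prop)

theorem isOpen_cyl (d : ℕ) (c : ℝ) : IsOpen (cyl d c) := by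
  have : cyl d c = ⋂ i : Fin d, (fun p : Fin (d + 1) → ℝ => p i.succ) ⁻¹' Set.Ioo 0 c := by
    ext p
    simp [cyl]
  rw [this]
  exact isOpen_iInter_of_finite fun i => isOpen_Ioo.preimage (continuous_apply _)

section Region

variable {d : ℕ} {c : ℝ} {f0 f1 : (Fin d → ℝ) → ℝ} {g0 g1 : (Fin d → ℝ) → (Fin d → ℝ)}
  {H0 H1 : (Fin d → ℝ) → Matrix (Fin d) (Fin d) ℝ}

/-- The point of the graph of the conjugate of `(1 - t) f0 + t f1` at which the slope is `v`,
where `u = (t, v)`. -/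
noncomputable def graphMap (f0 f1 : (Fin d → ℝ) → ℝ) (g0 g1 : (Fin d → ℝ) → (Fin d → ℝ))
    (u : Fin (d + 1) → ℝ) : Fin (d + 1) → ℝ :=
  Fin.cons (∑ i, u i.succ * ((1 - u 0) * g0 (Fin.tail u) i + u 0 * g1 (Fin.tail u) i)
      - ((1 - u 0) * f0 (Fin.tail u) + u 0 * f1 (Fin.tail u)))
    (fun i => (1 - u 0) * g0 (Fin.tail u) i + u 0 * g1 (Fin.tail u) i)

/-- Rows `1, …, d` of the Jacobian matrix of `graphMap`. -/
noncomputable def graphRow (g0 g1 : (Fin d → ℝ) → (Fin d → ℝ))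
    (H0 H1 : (Fin d → ℝ) → Matrix (Fin d) (Fin d) ℝ) (u : Fin (d + 1) → ℝ) (i : Fin d) :
    Fin (d + 1) → ℝ :=
  Fin.cons (g1 (Fin.tail u) i - g0 (Fin.tail u) i)
    (fun j => (1 - u 0) * H0 (Fin.tail u) i j + u 0 * H1 (Fin.tail u) i j)

/-- The Jacobian matrix of `graphMap`. -/
noncomputable def graphJac (f0 f1 : (Fin d → ℝ) → ℝ) (g0 g1 : (Fin d → ℝ) → (Fin d → ℝ))
    (H0 H1 : (Fin d → ℝ) → Matrix (Fin d) (Fin d) ℝ) (u : Fin (d + 1) → ℝ) :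
    Matrix (Fin (d + 1)) (Fin (d + 1)) ℝ :=
  Matrix.of (Fin.cons
    (fun k => ∑ i, u i.succ * graphRow g0 g1 H0 H1 u i k +
      (Fin.cons (f0 (Fin.tail u) - f1 (Fin.tail u)) (fun _ => 0) : Fin (d + 1) → ℝ) k)
    (graphRow g0 g1 H0 H1 u))

/-- Subtracting from row `0` its combination of the other rows leaves the single entry `f0 - f1`. -/
theorem det_graphJac (u : Fin (d + 1) → ℝ) : (graphJac f0 f1 g0 g1 H0 H1 u).det =
    -(f1 (Fin.tail u) - f0 (Fin.tail u)) *
      ((1 - u 0) • H0 (Fin.tail u) + u 0 • H1 (Fin.tail u)).det := by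
  let S : Matrix (Fin (d + 1)) (Fin (d + 1)) ℝ :=
    Matrix.of (Fin.cons (Fin.cons 1 (fun i => u i.succ))
      (fun i => Fin.cons 0 (fun j => if i = j then 1 else 0)))
  let T : Matrix (Fin (d + 1)) (Fin (d + 1)) ℝ :=
    Matrix.of (Fin.cons (Fin.cons (f0 (Fin.tail u) - f1 (Fin.tail u)) (fun _ => 0))
      (graphRow g0 g1 H0 H1 u))
  have hST : graphJac f0 f1 g0 g1 H0 H1 u = S * T := by
    ext i k
    refine Fin.cases ?_ (fun i => ?_) i
    · simp only [graphJac, S, T, Matrix.mul_apply, Fin.sum_univ_succ, Matrix.of_apply, Fin.cons_zero,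
        Fin.cons_succ]
      ring
    · simp [graphJac, S, T, Matrix.mul_apply, Fin.sum_univ_succ]
  have hS : S.det = 1 := by
    rw [Matrix.det_succ_column_zero, Fin.sum_univ_succ]
    have : S.submatrix (Fin.succAbove 0) Fin.succ = 1 := by
      ext i j
      simp [S, Matrix.one_apply]
    rw [this]
    simp [S]
  have hT : T.det = (f0 (Fin.tail u) - f1 (Fin.tail u)) *
      ((1 - u 0) • H0 (Fin.tail u) + u 0 • H1 (Fin.tail u)).det := by
    rw [Matrix.det_succ_row_zero, Fin.sum_univ_succ]
    have : T.submatrix Fin.succ (Fin.succAbove 0) =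
        (1 - u 0) • H0 (Fin.tail u) + u 0 • H1 (Fin.tail u) := by
      ext i j
      simp [T, graphRow]
    rw [this]
    simp [T]
  rw [hST, Matrix.det_mul, hS, hT]
  ring

theorem hasFDerivAt_graphMap (h0 : IsPotential c f0 g0 H0) (h1 : IsPotential c f1 g1 H1)
    (u : Fin (d + 1) → ℝ) :
    HasFDerivAt (graphMap f0 f1 g0 g1)
      (LinearMap.toContinuousLinearMap (Matrix.toLin' (graphJac f0 f1 g0 g1 H0 H1 u))) u := by
  let tl : (Fin (d + 1) → ℝ) →L[ℝ] (Fin d → ℝ) :=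
    ContinuousLinearMap.pi fun i => ContinuousLinearMap.proj i.succ
  have htl : HasFDerivAt (fun u : Fin (d + 1) → ℝ => (Fin.tail u : Fin d → ℝ)) tl u :=
    tl.hasFDerivAt
  have hp : ∀ k, HasFDerivAt (fun u : Fin (d + 1) → ℝ => u k)
      (ContinuousLinearMap.proj k : (Fin (d + 1) → ℝ) →L[ℝ] ℝ) u := fun k =>
    (ContinuousLinearMap.proj k : (Fin (d + 1) → ℝ) →L[ℝ] ℝ).hasFDerivAt
  have hcomb : ∀ {a b : (Fin d → ℝ) → ℝ} {a' b' : Fin d → ℝ},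
      HasFDerivAt a (dotL a') (Fin.tail u) → HasFDerivAt b (dotL b') (Fin.tail u) →
      HasFDerivAt (fun u : Fin (d + 1) → ℝ => (1 - u 0) * a (Fin.tail u) + u 0 * b (Fin.tail u))
        (dotL (Fin.cons (b (Fin.tail u) - a (Fin.tail u))
          (fun j => (1 - u 0) * a' j + u 0 * b' j))) u := by
    intro a b a' b' ha hb
    have ha2 : HasFDerivAt (fun u : Fin (d + 1) → ℝ => a (Fin.tail u)) ((dotL a').comp tl) u :=
      HasFDerivAt.comp u ha htl
    have hb2 : HasFDerivAt (fun u : Fin (d + 1) → ℝ => b (Fin.tail u)) ((dotL b').comp tl) u :=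
      HasFDerivAt.comp u hb htl
    refine ((((hp 0).const_sub 1).mul ha2).add ((hp 0).mul hb2)).congr_fderiv ?_
    ext x
    simp [dotL_apply, Fin.sum_univ_succ, tl, add_mul, Finset.sum_add_distrib, Finset.mul_sum, mul_assoc]
    ring
  have hg : ∀ i, HasFDerivAt (fun u : Fin (d + 1) → ℝ =>
      (1 - u 0) * g0 (Fin.tail u) i + u 0 * g1 (Fin.tail u) i) (dotL (graphRow g0 g1 H0 H1 u i)) u :=
    fun i => hcomb (h0.hg _ i) (h1.hg _ i)
  have hf := hcomb (h0.hf (Fin.tail u)) (h1.hf (Fin.tail u))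
  rw [hasFDerivAt_pi']
  intro k
  refine Fin.cases ?_ (fun i => ?_) k
  · simp only [graphMap, Fin.cons_zero]
    refine ((HasFDerivAt.fun_sum fun i (_ : i ∈ Finset.univ) =>
      (hp (Fin.succ i)).mul (hg i)).sub hf).congr_fderiv ?_
    ext x
    simp [dotL_apply, graphJac, Matrix.mulVec, dotProduct, Fin.sum_univ_succ, Finset.sum_add_distrib, add_mul]
    have e : ∑ i : Fin d, (∑ k : Fin d, u k.succ * graphRow g0 g1 H0 H1 u k i.succ) * x i.succ =
        ∑ k : Fin d, u k.succ * ∑ i : Fin d, graphRow g0 g1 H0 H1 u k i.succ * x i.succ := by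
      simp only [Finset.sum_mul, Finset.mul_sum]
      rw [Finset.sum_comm]
      exact Finset.sum_congr rfl fun _ _ => Finset.sum_congr rfl fun _ _ => by ring
    rw [e, Finset.sum_mul]
    simp only [mul_add, Finset.sum_add_distrib, mul_assoc]
    ring
  · simp only [graphMap, Fin.cons_succ]
    refine (hg i).congr_fderiv ?_
    ext x
    simp [dotL_apply, graphJac, Matrix.mulVec, dotProduct]

end Region

/-! ### Volume of the region between two conjugates -/

/-- The region between two conjugates over the cube is bounded. -/
theorem conjEpi_diff_subset {d : ℕ} {c K : ℝ} {f0 f1 : (Fin d → ℝ) → ℝ}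
    (hK : ∀ v, c * ∑ i, max (v i) 0 - K ≤ f0 v) :
    (conjEpi f1 \ conjEpi f0) ∩ cyl d c ⊆
      Set.Icc (Fin.cons (-f1 0) fun _ => 0) (Fin.cons K fun _ => c) := by
  rintro p ⟨⟨hp1, hp0⟩, hpc⟩
  simp only [conjEpi, Set.mem_ofPred_eq, not_forall, not_le] at hp0
  obtain ⟨v, hv⟩ := hp0
  have h1 : ∑ i, v i * p i.succ ≤ c * ∑ i, max (v i) 0 := by
    rw [Finset.mul_sum]
    refine Finset.sum_le_sum fun i _ => ?_
    have := hpc i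
    rcases le_total 0 (v i) with h | h
    · rw [max_eq_left h]; nlinarith
    · rw [max_eq_right h]; nlinarith
  constructor
  · intro k
    refine Fin.cases ?_ (fun i => ?_) k
    · have := hp1 0
      simpa using this
    · simpa using (hpc i).1.le
  · intro k
    refine Fin.cases ?_ (fun i => ?_) k
    · have := hK v
      simp only [Fin.cons_zero]
      linarith
    · simpa using (hpc i).2.le

theorem volume_conjEpi_diff_lt_top {d : ℕ} {c K : ℝ} {f0 f1 : (Fin d → ℝ) → ℝ}
    (hK : ∀ v, c * ∑ i, max (v i) 0 - K ≤ f0 v) :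
    volume ((conjEpi f1 \ conjEpi f0) ∩ cyl d c) < ⊤ :=
  (measure_mono (conjEpi_diff_subset hK)).trans_lt isCompact_Icc.measure_lt_top

section Region

variable {d : ℕ} {c : ℝ} {f0 f1 : (Fin d → ℝ) → ℝ} {g0 g1 : (Fin d → ℝ) → (Fin d → ℝ)}
  {H0 H1 : (Fin d → ℝ) → Matrix (Fin d) (Fin d) ℝ}

theorem IsPotential.interp (h0 : IsPotential c f0 g0 H0) (h1 : IsPotential c f1 g1 H1) {t : ℝ}
    (ht : 0 ≤ t) (ht1 : t ≤ 1) :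
    IsPotential c (fun v => (1 - t) * f0 v + t * f1 v) (fun v => (1 - t) • g0 v + t • g1 v)
      (fun v => (1 - t) • H0 v + t • H1 v) := by
  have := h0.comb h1 (sub_nonneg.2 ht1) ht (by linarith)
  rwa [← add_mul, sub_add_cancel, one_mul] at this

theorem graphMap_zero (u : Fin (d + 1) → ℝ) : graphMap f0 f1 g0 g1 u 0 =
    ∑ i, Fin.tail u i * ((1 - u 0) • g0 (Fin.tail u) + u 0 • g1 (Fin.tail u)) i -
      ((1 - u 0) * f0 (Fin.tail u) + u 0 * f1 (Fin.tail u)) := rfl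

theorem graphMap_succ (u : Fin (d + 1) → ℝ) (i : Fin d) : graphMap f0 f1 g0 g1 u i.succ =
    ((1 - u 0) • g0 (Fin.tail u) + u 0 • g1 (Fin.tail u)) i := rfl

/-- The point `graphMap u` lies on the graph of the conjugate of the interpolated potential. -/
theorem graphMap_le (h0 : IsPotential c f0 g0 H0) (h1 : IsPotential c f1 g1 H1)
    {u : Fin (d + 1) → ℝ} (hu : u ∈ slab d) (w : Fin d → ℝ) :
    ∑ i, w i * graphMap f0 f1 g0 g1 u i.succ - ((1 - u 0) * f0 w + u 0 * f1 w) ≤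
      graphMap f0 f1 g0 g1 u 0 := by
  have := (h0.interp h1 hu.1.le hu.2).gradient_le (Fin.tail u) w
  rw [graphMap_zero]
  simp only [graphMap_succ]
  simp only [mul_sub, Finset.sum_sub_distrib] at this
  simp only [mul_comm (w _), mul_comm (Fin.tail u _)]
  linarith

/-- As `f0 < f1`, the conjugates of the interpolated potentials decrease strictly in `t`, so the
graphs for different `t` are disjoint; for fixed `t` the gradient map is injective. -/
theorem injOn_graphMap (h0 : IsPotential c f0 g0 H0) (h1 : IsPotential c f1 g1 H1)
    (hlt : ∀ v, f0 v < f1 v) : Set.InjOn (graphMap f0 f1 g0 g1) (slab d) := by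
  have key : ∀ u ∈ slab d, ∀ u' ∈ slab d, graphMap f0 f1 g0 g1 u = graphMap f0 f1 g0 g1 u' →
      ¬ u 0 < u' 0 := by
    intro u hu u' hu' he hlt'
    have h2 := graphMap_le h0 h1 hu (Fin.tail u')
    have h3 := graphMap_zero (f0 := f0) (f1 := f1) (g0 := g0) (g1 := g1) u'
    rw [he] at h2
    simp only [graphMap_succ] at h2
    have := mul_lt_mul_of_pos_right hlt' (sub_pos.2 (hlt (Fin.tail u')))
    linarith
  intro u hu u' hu' he
  have ht : u 0 = u' 0 :=
    le_antisymm (not_lt.1 (key u' hu' u hu he.symm)) (not_lt.1 (key u hu u' hu' he))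
  have hv : Fin.tail u = Fin.tail u' := by
    apply (h0.interp h1 hu.1.le hu.2).injective
    ext i
    have := congrFun he i.succ
    rw [graphMap_succ, graphMap_succ, ← ht] at this
    exact this
  rw [← Fin.cons_self_tail u, ← Fin.cons_self_tail u', ht, hv]

theorem image_graphMap (h0 : IsPotential c f0 g0 H0) (h1 : IsPotential c f1 g1 H1)
    (hlt : ∀ v, f0 v < f1 v) :
    graphMap f0 f1 g0 g1 '' slab d = (conjEpi f1 \ conjEpi f0) ∩ cyl d c := by
  apply Set.Subset.antisymm
  · rintro _ ⟨u, hu, rfl⟩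
    refine ⟨⟨fun w => ?_, fun hmem => ?_⟩, fun i => ?_⟩
    · have h2 := graphMap_le h0 h1 hu w
      have := mul_nonneg (sub_nonneg.2 hu.2) (sub_pos.2 (hlt w)).le
      linarith
    · have h2 := hmem (Fin.tail u)
      rw [graphMap_zero] at h2
      simp only [graphMap_succ] at h2
      have := mul_pos hu.1 (sub_pos.2 (hlt (Fin.tail u)))
      linarith
    · exact (h0.interp h1 hu.1.le hu.2).range (Fin.tail u) i
  · rintro p ⟨⟨hp1, hp0⟩, hpc⟩
    obtain ⟨M, hM⟩ : ∃ M, ∀ v, f1 v - f0 v ≤ M := by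
      obtain ⟨K, hK⟩ := h0.bound
      obtain ⟨K', hK'⟩ := h1.bound
      refine ⟨K + K', fun v => ?_⟩
      linarith [(abs_le.1 (hK v)).1, (abs_le.1 (hK' v)).2]
    -- `v t` is the point where the interpolated potential has gradient `(p 1, …, p d)`
    have hex : ∀ t : Set.Icc (0 : ℝ) 1, ∃ v, (1 - t.1) • g0 v + t.1 • g1 v = Fin.tail p :=
      fun t => (h0.interp h1 t.2.1 t.2.2).exists_gradient hpc
    choose v hv using hex
    let φ : Set.Icc (0 : ℝ) 1 → ℝ := fun t =>
      ∑ i, v t i * p i.succ - ((1 - t.1) * f0 (v t) + t.1 * f1 (v t))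
    have hφ : ∀ t w, ∑ i, w i * p i.succ - ((1 - t.1) * f0 w + t.1 * f1 w) ≤ φ t := by
      intro t w
      have := (h0.interp h1 t.2.1 t.2.2).gradient_le (v t) w
      simp only [hv t, mul_sub, Finset.sum_sub_distrib, Fin.tail] at this
      simp only [φ, mul_comm (w _), mul_comm (v t _)]
      linarith
    have hlip : ∀ s t : Set.Icc (0 : ℝ) 1, φ t - φ s ≤ M * dist t s := by
      intro s t
      have h2 := hφ s (v t)
      have h3 : φ t = ∑ i, v t i * p i.succ - ((1 - t.1) * f0 (v t) + t.1 * f1 (v t)) := rfl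
      have h4 : dist t s = |t.1 - s.1| := rfl
      have h5 := neg_abs_le (t.1 - s.1)
      have h6 := sub_pos.2 (hlt (v t))
      have h7 := hM (v t)
      have h8 := abs_nonneg (t.1 - s.1)
      rw [h4]
      nlinarith
    have hcont : Continuous φ := by
      have : LipschitzWith M.toNNReal φ := by
        refine LipschitzWith.of_le_add_mul _ fun t s => ?_
        have h2 := hlip s t
        have h3 := mul_le_mul_of_nonneg_right (Real.le_coe_toNNReal M) (dist_nonneg (x := t) (y := s))
        linarith
      exact this.continuous
    have hz : p 0 ≤ φ ⟨0, by simp⟩ := by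
      simp only [conjEpi, Set.mem_ofPred_eq, not_forall, not_le] at hp0
      obtain ⟨w, hw⟩ := hp0
      have := hφ ⟨0, by simp⟩ w
      simp only at this
      linarith
    have ho : φ ⟨1, by simp⟩ ≤ p 0 := by
      have := hp1 (v ⟨1, by simp⟩)
      simp only [φ]
      linarith
    obtain ⟨t, ht⟩ := mem_range_of_exists_le_of_exists_ge hcont ⟨_, ho⟩ ⟨_, hz⟩
    have ht0 : 0 < t.1 := by
      rcases t.2.1.eq_or_lt with h | h
      · exfalso
        apply hp0
        intro w
        have := hφ t w
        rw [ht, ← h] at this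
        linarith
      · exact h
    refine ⟨Fin.cons t.1 (v t), ⟨ht0, t.2.2⟩, ?_⟩
    have hs : ∀ i : Fin d, graphMap f0 f1 g0 g1 (Fin.cons t.1 (v t)) i.succ = p i.succ := by
      intro i
      have := congrFun (hv t) i
      simpa [graphMap_succ, Fin.tail] using this
    ext k
    refine Fin.cases ?_ hs k
    rw [graphMap_zero, ← ht]
    have h2 : ∀ i, ((1 - t.1) • g0 (v t) + t.1 • g1 (v t)) i = p i.succ := fun i => congrFun (hv t) i
    simp only [Fin.cons_zero, Fin.tail_cons, h2, φ]

/-- The change of variables formula for the region between the two conjugates. -/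
theorem volume_conjEpi_diff (h0 : IsPotential c f0 g0 H0) (h1 : IsPotential c f1 g1 H1)
    (hlt : ∀ v, f0 v < f1 v) :
    IntegrableOn (fun u : Fin (d + 1) → ℝ => (f1 (Fin.tail u) - f0 (Fin.tail u)) *
        ((1 - u 0) • H0 (Fin.tail u) + u 0 • H1 (Fin.tail u)).det) (slab d) ∧
    (volume ((conjEpi f1 \ conjEpi f0) ∩ cyl d c)).toReal =
      ∫ u in slab d, (f1 (Fin.tail u) - f0 (Fin.tail u)) *
        ((1 - u 0) • H0 (Fin.tail u) + u 0 • H1 (Fin.tail u)).det := by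
  have hder : ∀ u ∈ slab d, HasFDerivWithinAt (graphMap f0 f1 g0 g1)
      (LinearMap.toContinuousLinearMap (Matrix.toLin' (graphJac f0 f1 g0 g1 H0 H1 u)))
      (slab d) u := fun u _ => (hasFDerivAt_graphMap h0 h1 u).hasFDerivWithinAt
  have hinj := injOn_graphMap h0 h1 hlt
  have him := image_graphMap h0 h1 hlt
  have hdet : ∀ u ∈ slab d, |(LinearMap.toContinuousLinearMap
        (Matrix.toLin' (graphJac f0 f1 g0 g1 H0 H1 u))).det| • (1 : ℝ) =
      (f1 (Fin.tail u) - f0 (Fin.tail u)) *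
        ((1 - u 0) • H0 (Fin.tail u) + u 0 • H1 (Fin.tail u)).det := by
    intro u hu
    have e : (LinearMap.toContinuousLinearMap
        (Matrix.toLin' (graphJac f0 f1 g0 g1 H0 H1 u))).det = (graphJac f0 f1 g0 g1 H0 H1 u).det := by
      rw [ContinuousLinearMap.det, LinearMap.coe_toContinuousLinearMap, LinearMap.det_toLin']
    rw [e, det_graphJac, neg_mul, abs_neg, smul_eq_mul, mul_one, abs_of_nonneg]
    exact mul_nonneg (sub_pos.2 (hlt _)).le
      ((h0.interp h1 hu.1.le hu.2).pos (Fin.tail u)).det_pos.le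
  obtain ⟨K, hK⟩ := h0.bound
  have hfin : volume ((conjEpi f1 \ conjEpi f0) ∩ cyl d c) < ⊤ :=
    volume_conjEpi_diff_lt_top (K := K) fun v => by linarith [(abs_le.1 (hK v)).1]
  have hinteg := (integrableOn_image_iff_integrableOn_abs_det_fderiv_smul volume
    (measurableSet_slab d) hder hinj (fun _ => (1 : ℝ))).1 (by
      rw [him]; exact integrableOn_const hfin.ne)
  have hval := integral_image_eq_integral_abs_det_fderiv_smul volume
    (measurableSet_slab d) hder hinj (fun _ => (1 : ℝ))
  refine ⟨hinteg.congr_fun hdet (measurableSet_slab d), ?_⟩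
  rw [← setIntegral_congr_fun (measurableSet_slab d) hdet, ← hval, him]
  simp [Measure.real]

/-- The alternating sum of volumes of the regions is nonnegative: after the change of variables
it is the integral of an alternating sum of determinants of positive semidefinite matrices. -/
theorem smooth_alternating_sum_nonneg {ι : Type*} [Fintype ι] [DecidableEq ι]
    {F : ι → (Fin d → ℝ) → ℝ} {G : ι → (Fin d → ℝ) → (Fin d → ℝ)}
    {Q : ι → (Fin d → ℝ) → Matrix (Fin d) (Fin d) ℝ}
    (h0 : IsPotential c f0 g0 H0) (h1 : IsPotential c f1 g1 H1) (hlt : ∀ v, f0 v < f1 v)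
    (hF : ∀ l, IsPotential c (F l) (G l) (Q l)) (K : Finset ι) :
    0 ≤ ∑ L ∈ K.powerset, (-1 : ℝ) ^ (K \ L).card *
      (volume ((conjEpi (fun v => f1 v + ∑ l ∈ L, F l v) \ conjEpi (fun v => f0 v + ∑ l ∈ L, F l v))
        ∩ cyl d ((L.card + 1) * c))).toReal := by
  have hvol := fun L : Finset ι => volume_conjEpi_diff (h0.add_sum hF L) (h1.add_sum hF L)
    (fun v => by simpa using hlt v)
  rw [Finset.sum_congr rfl fun L _ => by rw [(hvol L).2, ← integral_const_mul]]
  rw [← integral_finsetSum _ fun L _ => (hvol L).1.const_mul _]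
  refine setIntegral_nonneg (measurableSet_slab d) fun u hu => ?_
  set v := Fin.tail u
  have e : ∀ L : Finset ι, (-1 : ℝ) ^ (K \ L).card *
      (((f1 v + ∑ l ∈ L, F l v) - (f0 v + ∑ l ∈ L, F l v)) *
        ((1 - u 0) • (H0 v + ∑ l ∈ L, Q l v) + u 0 • (H1 v + ∑ l ∈ L, Q l v)).det) =
      (f1 v - f0 v) * ((-1 : ℝ) ^ (K \ L).card *
        (((1 - u 0) • H0 v + u 0 • H1 v) + ∑ l ∈ L, Q l v).det) := by
    intro L
    have : (1 - u 0) • (H0 v + ∑ l ∈ L, Q l v) + u 0 • (H1 v + ∑ l ∈ L, Q l v) =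
        ((1 - u 0) • H0 v + u 0 • H1 v) + ∑ l ∈ L, Q l v := by
      module
    rw [this]
    ring
  simp only [e, ← Finset.mul_sum]
  exact mul_nonneg (sub_pos.2 (hlt v)).le (det_alternating_sum_nonneg _ _
    ((h0.interp h1 hu.1.le hu.2).pos v).posSemidef (fun l => ((hF l).pos v).posSemidef) K)

end Region

/-! ### Log-sum-exp approximation of support functions -/

/-- The affine function of the slope `v` attached to the point `e`. -/
def aff {d : ℕ} (e : Fin (d + 1) → ℝ) (v : Fin d → ℝ) : ℝ := ∑ i, v i * e i.succ - e 0

/-- The piecewise linear function `v ↦ max_{e ∈ E} aff e v`. -/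
noncomputable def supp {d : ℕ} (E : Finset (Fin (d + 1) → ℝ)) (v : Fin d → ℝ) : ℝ :=
  ⨆ e : E, aff e.1 v

/-- The smooth approximation `r⁻¹ log ∑ exp (r · aff e v)` of `supp E`. -/
noncomputable def lse {d : ℕ} (r : ℝ) (E : Finset (Fin (d + 1) → ℝ)) (v : Fin d → ℝ) : ℝ :=
  r⁻¹ * Real.log (∑ e ∈ E, Real.exp (r * aff e v))

/-- A finite set of points of the orthant with all but the `0`-th coordinate at most `N`, containing
all the points `(N, q)` with `q` a vertex of the cube `[0, N]^d`. -/
structure IsFull {d : ℕ} (N : ℝ) (E : Finset (Fin (d + 1) → ℝ)) : Prop where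
  pos : 0 < N
  nonneg : ∀ e ∈ E, ∀ k, 0 ≤ e k
  le : ∀ e ∈ E, ∀ i : Fin d, e i.succ ≤ N
  corner : ∀ s : Finset (Fin d), (Fin.cons N (fun i => if i ∈ s then N else 0)) ∈ E

section

variable {d : ℕ} {N : ℝ} {E : Finset (Fin (d + 1) → ℝ)}

theorem aff_le_supp {e : Fin (d + 1) → ℝ} (he : e ∈ E) (v : Fin d → ℝ) : aff e v ≤ supp E v :=
  le_ciSup (f := fun e : E => aff e.1 v) (Set.finite_range _).bddAbove ⟨e, he⟩

theorem exists_aff_eq_supp (hE : E.Nonempty) (v : Fin d → ℝ) : ∃ e ∈ E, aff e v = supp E v := by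
  have : Nonempty E := hE.to_subtype
  obtain ⟨e, he⟩ := exists_eq_ciSup_of_finite (f := fun e : E => aff e.1 v)
  exact ⟨e.1, e.2, he⟩

namespace IsFull

theorem nonempty (h : IsFull N E) : E.Nonempty := ⟨_, h.corner ∅⟩

theorem le_supp (h : IsFull N E) (v : Fin d → ℝ) : N * ∑ i, max (v i) 0 - N ≤ supp E v := by
  classical
  refine le_trans (le_of_eq ?_) (aff_le_supp (h.corner {i | 0 ≤ v i}) v)
  simp only [aff, Fin.cons_succ, Fin.cons_zero, Finset.mul_sum]
  congr 1
  refine Finset.sum_congr rfl fun i _ => ?_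
  by_cases hv : 0 ≤ v i
  · simp [hv, mul_comm]
  · simp [hv, (not_le.1 hv).le]

theorem supp_le (h : IsFull N E) (v : Fin d → ℝ) : supp E v ≤ N * ∑ i, max (v i) 0 := by
  obtain ⟨e, he, hev⟩ := exists_aff_eq_supp h.nonempty v
  rw [← hev, aff, Finset.mul_sum]
  have h1 : ∑ i, v i * e i.succ ≤ ∑ i, N * max (v i) 0 := by
    refine Finset.sum_le_sum fun i _ => ?_
    have h2 := h.nonneg e he i.succ
    have h3 := h.le e he i
    have h4 := le_max_left (v i) 0
    have h5 := le_max_right (v i) 0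
    nlinarith
  linarith [h.nonneg e he 0]

end IsFull

theorem sum_exp_pos (hE : E.Nonempty) (r : ℝ) (v : Fin d → ℝ) :
    0 < ∑ e ∈ E, Real.exp (r * aff e v) :=
  Finset.sum_pos (fun _ _ => Real.exp_pos _) hE

theorem supp_le_lse (hE : E.Nonempty) {r : ℝ} (hr : 0 < r) (v : Fin d → ℝ) :
    supp E v ≤ lse r E v := by
  obtain ⟨e, he, hev⟩ := exists_aff_eq_supp hE v
  rw [lse, inv_mul_eq_div, le_div_iff₀ hr, Real.le_log_iff_exp_le (sum_exp_pos hE r v), ← hev,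
    mul_comm]
  exact Finset.single_le_sum (f := fun e => Real.exp (r * aff e v))
    (fun _ _ => (Real.exp_pos _).le) he

theorem lse_le (hE : E.Nonempty) {r : ℝ} (hr : 0 < r) (v : Fin d → ℝ) :
    lse r E v ≤ supp E v + r⁻¹ * Real.log E.card := by
  have h1 : ∑ e ∈ E, Real.exp (r * aff e v) ≤ E.card * Real.exp (r * supp E v) := by
    rw [← nsmul_eq_mul]
    refine Finset.sum_le_card_nsmul _ _ _ fun e he => ?_
    exact Real.exp_le_exp.2 (mul_le_mul_of_nonneg_left (aff_le_supp he v) hr.le)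
  have hc : (E.card : ℝ) ≠ 0 := by exact_mod_cast hE.card_pos.ne'
  have h2 := Real.log_le_log (sum_exp_pos hE r v) h1
  rw [Real.log_mul hc (Real.exp_pos _).ne', Real.log_exp] at h2
  have h3 := mul_le_mul_of_nonneg_left h2 (inv_pos.2 hr).le
  rw [lse]
  refine h3.trans (le_of_eq ?_)
  field_simp
  ring

theorem lse_mono {E' : Finset (Fin (d + 1) → ℝ)} (hE : E.Nonempty) (hEE : E ⊆ E') {r : ℝ}
    (hr : 0 < r) (v : Fin d → ℝ) : lse r E v ≤ lse r E' v := by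
  refine mul_le_mul_of_nonneg_left (Real.log_le_log (sum_exp_pos hE r v) ?_) (inv_pos.2 hr).le
  exact Finset.sum_le_sum_of_subset_of_nonneg hEE fun _ _ _ => (Real.exp_pos _).le

/-- The Gibbs average of `φ` at the slope `v`. -/
noncomputable def gibbs (r : ℝ) (E : Finset (Fin (d + 1) → ℝ)) (φ : (Fin (d + 1) → ℝ) → ℝ)
    (v : Fin d → ℝ) : ℝ :=
  (∑ e ∈ E, Real.exp (r * aff e v) * φ e) / ∑ e ∈ E, Real.exp (r * aff e v)

theorem hasFDerivAt_sum_exp (r : ℝ) (φ : (Fin (d + 1) → ℝ) → ℝ) (v : Fin d → ℝ) :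
    HasFDerivAt (fun v => ∑ e ∈ E, Real.exp (r * aff e v) * φ e)
      (dotL fun j => r * ∑ e ∈ E, Real.exp (r * aff e v) * (φ e * e j.succ)) v := by
  have haff : ∀ e : Fin (d + 1) → ℝ, HasFDerivAt (aff e) (dotL fun j => e j.succ) v := by
    intro e
    have := ((dotL fun j => e j.succ).hasFDerivAt (x := v)).sub_const (e 0)
    refine this.congr_of_eventuallyEq (Filter.Eventually.of_forall fun w => ?_)
    simp [aff, dotL_apply, mul_comm]
  refine (HasFDerivAt.fun_sum fun e (_ : e ∈ E) =>
    (((haff e).const_mul r).exp.mul_const (φ e))).congr_fderiv ?_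
  ext x
  simp only [sum_apply, smul_apply, dotL_apply,
    smul_eq_mul, Finset.mul_sum, Finset.sum_mul]
  rw [Finset.sum_comm]
  refine Finset.sum_congr rfl fun _ _ => Finset.sum_congr rfl fun _ _ => by ring

theorem hasFDerivAt_gibbs (hE : E.Nonempty) (r : ℝ) (φ : (Fin (d + 1) → ℝ) → ℝ) (v : Fin d → ℝ) :
    HasFDerivAt (gibbs r E φ)
      (dotL fun j => r * (gibbs r E (fun e => φ e * e j.succ) v -
        gibbs r E φ v * gibbs r E (fun e => e j.succ) v)) v := by
  have hZ := (sum_exp_pos hE r v).ne'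
  have h1 := hasFDerivAt_sum_exp (E := E) r φ v
  have h2 := hasFDerivAt_sum_exp (E := E) r (fun _ => 1) v
  simp only [mul_one, one_mul] at h2
  have h3 := (hasDerivAt_inv hZ).comp_hasFDerivAt v h2
  have h4 := h1.mul h3
  refine (h4.congr_of_eventuallyEq (Filter.Eventually.of_forall fun w => ?_)).congr_fderiv ?_
  · simp [gibbs, div_eq_mul_inv]
  ext x
  simp only [add_apply, smul_apply, dotL_apply, Function.comp,
    smul_eq_mul, gibbs, Finset.mul_sum (s := Finset.univ (α := Fin d)), ← Finset.sum_add_distrib]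
  refine Finset.sum_congr rfl fun j _ => ?_
  field_simp
  ring

theorem gibbs_pos {φ : (Fin (d + 1) → ℝ) → ℝ} (h : ∀ e ∈ E, 0 ≤ φ e) (h' : ∃ e ∈ E, 0 < φ e)
    (r : ℝ) (v : Fin d → ℝ) : 0 < gibbs r E φ v := by
  have hE : E.Nonempty := let ⟨e, he, _⟩ := h'; ⟨e, he⟩
  refine div_pos (Finset.sum_pos' (fun e he => mul_nonneg (Real.exp_pos _).le (h e he)) ?_)
    (sum_exp_pos hE r v)
  obtain ⟨e, he, hp⟩ := h'
  exact ⟨e, he, mul_pos (Real.exp_pos _) hp⟩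

theorem gibbs_add (r : ℝ) (φ ψ : (Fin (d + 1) → ℝ) → ℝ) (v : Fin d → ℝ) :
    gibbs r E (fun e => φ e + ψ e) v = gibbs r E φ v + gibbs r E ψ v := by
  simp [gibbs, mul_add, Finset.sum_add_distrib, add_div]

theorem gibbs_mul (r a : ℝ) (φ : (Fin (d + 1) → ℝ) → ℝ) (v : Fin d → ℝ) :
    gibbs r E (fun e => a * φ e) v = a * gibbs r E φ v := by
  simp only [gibbs, mul_left_comm _ a, ← Finset.mul_sum, mul_div_assoc]

theorem gibbs_sum {κ : Type*} (s : Finset κ) (r : ℝ) (φ : κ → (Fin (d + 1) → ℝ) → ℝ)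
    (v : Fin d → ℝ) : gibbs r E (fun e => ∑ k ∈ s, φ k e) v = ∑ k ∈ s, gibbs r E (φ k) v := by
  simp only [gibbs, Finset.mul_sum, ← Finset.sum_div]
  rw [Finset.sum_comm]

theorem gibbs_const (hE : E.Nonempty) (r a : ℝ) (v : Fin d → ℝ) :
    gibbs r E (fun _ => a) v = a := by
  simp only [gibbs, ← Finset.sum_mul]
  exact mul_div_cancel_left₀ _ (sum_exp_pos hE r v).ne'

/-- The gradient of the log-sum-exp function is a Gibbs mean of the points of `E`, and its Hessian a
multiple of the Gibbs covariance matrix; the vertices of the cube in `E` make the latter definite. -/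
theorem IsFull.isPotential (h : IsFull N E) {r : ℝ} (hr : 0 < r) :
    IsPotential N (lse r E) (fun v i => gibbs r E (fun e => e i.succ) v)
      (fun v => Matrix.of fun i j => r * (gibbs r E (fun e => e i.succ * e j.succ) v -
        gibbs r E (fun e => e i.succ) v * gibbs r E (fun e => e j.succ) v)) where
  hf v := by
    have h2 := hasFDerivAt_sum_exp (E := E) r (fun _ => 1) v
    simp only [mul_one, one_mul] at h2
    refine ((h2.log (sum_exp_pos h.nonempty r v).ne').const_mul r⁻¹).congr_fderiv ?_
    ext x
    simp only [smul_apply, dotL_apply, smul_eq_mul, gibbs,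
      Finset.mul_sum (s := Finset.univ (α := Fin d))]
    refine Finset.sum_congr rfl fun j _ => ?_
    field_simp
  hg v i := hasFDerivAt_gibbs h.nonempty r _ v
  pos v := by
    refine Matrix.PosDef.of_dotProduct_mulVec_pos ?_ fun x hx => ?_
    · ext i j
      simp [mul_comm]
    · -- the quadratic form is `r` times the variance of `e ↦ ⟨x, e⟩`
      set L : (Fin (d + 1) → ℝ) → ℝ := fun e => ∑ i, x i * e i.succ with hL
      set m := gibbs r E L v with hm
      have hm' : m = ∑ i, x i * gibbs r E (fun e => e i.succ) v := by
        simp only [hm, hL, gibbs_sum, gibbs_mul]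
      have hvar : 0 < gibbs r E (fun e => (L e - m) ^ 2) v := by
        refine gibbs_pos (fun _ _ => sq_nonneg _) ?_ r v
        by_contra! hcon
        have hz : ∀ e ∈ E, L e = m := fun e he => by
          have := hcon e he
          nlinarith [sq_nonneg (L e - m), pow_eq_zero_iff (two_ne_zero) |>.1
            (le_antisymm this (sq_nonneg (L e - m)))]
        apply hx
        ext i
        have h0 := hz _ (h.corner ∅)
        have h1 := hz _ (h.corner {i})
        rw [← h0] at h1
        simp [hL] at h1
        exact h1.resolve_right h.pos.ne'
      have hLL : gibbs r E (fun e => (L e) ^ 2) v =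
          ∑ i, ∑ j, x i * x j * gibbs r E (fun e => e i.succ * e j.succ) v := by
        simp only [← gibbs_mul, ← gibbs_sum]
        congr 1
        ext e
        rw [sq, hL, Finset.sum_mul_sum]
        exact Finset.sum_congr rfl fun _ _ => Finset.sum_congr rfl fun _ _ => by ring
      have hexp : gibbs r E (fun e => (L e - m) ^ 2) v =
          gibbs r E (fun e => (L e) ^ 2) v - m ^ 2 := by
        have : (fun e => (L e - m) ^ 2) = fun e => (L e ^ 2 + (-2 * m) * L e) + m ^ 2 := by
          ext e; ring
        rw [this, gibbs_add, gibbs_add, gibbs_mul, gibbs_const h.nonempty, ← hm]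
        ring
      have hmm : m ^ 2 = ∑ i, ∑ j, x i * x j *
          (gibbs r E (fun e => e i.succ) v * gibbs r E (fun e => e j.succ) v) := by
        rw [sq, hm', Finset.sum_mul_sum]
        exact Finset.sum_congr rfl fun _ _ => Finset.sum_congr rfl fun _ _ => by ring
      rw [hexp, hLL, hmm] at hvar
      have hfin := mul_pos hr hvar
      refine hfin.trans_eq ?_
      simp only [star_trivial, dotProduct, Matrix.mulVec, Matrix.of_apply, Finset.mul_sum,
        ← Finset.sum_sub_distrib]
      exact Finset.sum_congr rfl fun _ _ => Finset.sum_congr rfl fun _ _ => by ring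
  range v i := by
    constructor
    · exact gibbs_pos (fun e he => h.nonneg e he _)
        ⟨_, h.corner {i}, by simpa using h.pos⟩ r v
    · have : 0 < gibbs r E (fun e => N + (-1) * e i.succ) v := by
        refine gibbs_pos (fun e he => by linarith [h.le e he i])
          ⟨_, h.corner ∅, by simpa using h.pos⟩ r v
      rw [gibbs_add, gibbs_mul, gibbs_const h.nonempty] at this
      linarith
  bound := by
    refine ⟨N + r⁻¹ * Real.log E.card, fun v => ?_⟩
    have h1 := supp_le_lse h.nonempty hr v
    have h2 := lse_le h.nonempty hr v
    have h3 := h.le_supp v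
    have h4 := h.supp_le v
    have h5 : 0 ≤ r⁻¹ * Real.log E.card :=
      mul_nonneg (inv_pos.2 hr).le (Real.log_nonneg (by exact_mod_cast h.nonempty.card_pos))
    rw [abs_le]
    constructor <;> linarith [h.pos]

end

/-! ### The piecewise linear case -/

open Filter Topology in
/-- Membership in the epigraph of the conjugate stabilises along a sequence of functions that
converges pointwise from above. -/
theorem eventually_mem_conjEpi_iff {d : ℕ} {f : ℕ → (Fin d → ℝ) → ℝ} {h : (Fin d → ℝ) → ℝ}
    (hle : ∀ k v, h v ≤ f k v) (hlim : ∀ v, Tendsto (fun k => f k v) atTop (𝓝 (h v)))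
    (p : Fin (d + 1) → ℝ) : ∀ᶠ k in atTop, (p ∈ conjEpi (f k) ↔ p ∈ conjEpi h) := by
  by_cases hp : p ∈ conjEpi h
  · refine Eventually.of_forall fun k => iff_of_true (fun v => ?_) hp
    linarith [hp v, hle k v]
  · have hp' := hp
    simp only [conjEpi, Set.mem_ofPred_eq, not_forall, not_le] at hp'
    obtain ⟨v, hv⟩ := hp'
    filter_upwards [(hlim v).eventually (gt_mem_nhds (show h v < ∑ i, v i * p i.succ - p 0 by
      linarith))] with k hk
    refine iff_of_false (fun hm => ?_) hp
    linarith [hm v]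

open Filter Topology in
/-- Volumes of the regions between conjugates converge when the potentials decrease pointwise. -/
theorem tendsto_volume_conjEpi_diff {d : ℕ} {c K : ℝ} {f0 f1 : ℕ → (Fin d → ℝ) → ℝ}
    {h0 h1 : (Fin d → ℝ) → ℝ} (hK : ∀ v, c * ∑ i, max (v i) 0 - K ≤ h0 v)
    (hle0 : ∀ k v, h0 v ≤ f0 k v) (hle1 : ∀ k v, h1 v ≤ f1 k v)
    (hlim0 : ∀ v, Tendsto (fun k => f0 k v) atTop (𝓝 (h0 v)))
    (hlim1 : ∀ v, Tendsto (fun k => f1 k v) atTop (𝓝 (h1 v))) :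
    Tendsto (fun k => (volume ((conjEpi (f1 k) \ conjEpi (f0 k)) ∩ cyl d c)).toReal) atTop
      (𝓝 (volume ((conjEpi h1 \ conjEpi h0) ∩ cyl d c)).toReal) := by
  have hmeas : ∀ a b : (Fin d → ℝ) → ℝ,
      MeasurableSet ((conjEpi a \ conjEpi b) ∩ cyl d c) := fun a b =>
    ((isClosed_conjEpi a).measurableSet.diff (isClosed_conjEpi b).measurableSet).inter
      (isOpen_cyl d c).measurableSet
  refine (ENNReal.tendsto_toReal (volume_conjEpi_diff_lt_top hK).ne).comp ?_
  refine tendsto_measure_of_tendsto_indicator (B := Set.Icc (Fin.cons (-(h1 0 + 1)) fun _ => 0)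
    (Fin.cons K fun _ => c)) atTop (fun k => hmeas _ _) measurableSet_Icc
    isCompact_Icc.measure_lt_top.ne ?_ ?_
  · filter_upwards [(hlim1 0).eventually (gt_mem_nhds (lt_add_one (h1 0)))] with k hk
    refine (conjEpi_diff_subset fun v => (hK v).trans (hle0 k v)).trans
      (Set.Icc_subset_Icc_left ?_)
    intro i
    refine Fin.cases ?_ (fun i => ?_) i
    · simpa using hk.le
    · simp
  · intro p
    filter_upwards [eventually_mem_conjEpi_iff hle0 hlim0 p,
      eventually_mem_conjEpi_iff hle1 hlim1 p] with k ha hb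
    simp [ha, hb]

open Filter Topology in
theorem tendsto_lse {d : ℕ} {E : Finset (Fin (d + 1) → ℝ)} (hE : E.Nonempty) (v : Fin d → ℝ) :
    Tendsto (fun k : ℕ => lse (k + 1) E v) atTop (𝓝 (supp E v)) := by
  have h1 : Tendsto (fun k : ℕ => ((k : ℝ) + 1)⁻¹) atTop (𝓝 0) := by
    simpa using tendsto_one_div_add_atTop_nhds_zero_nat (𝕜 := ℝ)
  have h2 := (h1.mul_const (Real.log E.card)).const_add (supp E v)
  rw [zero_mul, add_zero] at h2
  exact tendsto_of_tendsto_of_tendsto_of_le_of_le tendsto_const_nhds h2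
    (fun k => supp_le_lse hE (by positivity) v) (fun k => lse_le hE (by positivity) v)

/-- The alternating sum inequality for piecewise linear functions, by approximation. -/
theorem supp_alternating_sum_nonneg {d : ℕ} {N : ℝ} {ι : Type*} [Fintype ι] [DecidableEq ι]
    {E0 E1 : Finset (Fin (d + 1) → ℝ)} {E : ι → Finset (Fin (d + 1) → ℝ)} (h0 : IsFull N E0)
    (h1 : IsFull N E1) (h01 : E0 ⊆ E1) (hE : ∀ l, IsFull N (E l)) (K : Finset ι) :
    0 ≤ ∑ L ∈ K.powerset, (-1 : ℝ) ^ (K \ L).card *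
      (volume ((conjEpi (fun v => supp E1 v + ∑ l ∈ L, supp (E l) v) \
        conjEpi (fun v => supp E0 v + ∑ l ∈ L, supp (E l) v))
        ∩ cyl d ((L.card + 1) * N))).toReal := by
  have hr : ∀ k : ℕ, (0 : ℝ) < k + 1 := fun k => by positivity
  -- the shift by `1 / (k + 1)` makes the inequality between the two potentials strict
  refine ge_of_tendsto' (x := Filter.atTop) (f := fun k : ℕ =>
    ∑ L ∈ K.powerset, (-1 : ℝ) ^ (K \ L).card *
      (volume ((conjEpi (fun v => (lse (k + 1) E1 v + ((k : ℝ) + 1)⁻¹) +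
          ∑ l ∈ L, lse (k + 1) (E l) v) \
        conjEpi (fun v => lse (k + 1) E0 v + ∑ l ∈ L, lse (k + 1) (E l) v))
        ∩ cyl d ((L.card + 1) * N))).toReal) ?_ fun k => ?_
  · refine tendsto_finsetSum _ fun L _ => Filter.Tendsto.const_mul _ ?_
    have hs : ∀ v, Filter.Tendsto (fun k : ℕ => ∑ l ∈ L, lse (k + 1) (E l) v) Filter.atTop
        (nhds (∑ l ∈ L, supp (E l) v)) := fun v =>
      tendsto_finsetSum _ fun l _ => tendsto_lse (hE l).nonempty v
    have hsle : ∀ (k : ℕ) v, ∑ l ∈ L, supp (E l) v ≤ ∑ l ∈ L, lse (k + 1) (E l) v := fun k v =>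
      Finset.sum_le_sum fun l _ => supp_le_lse (hE l).nonempty (hr k) v
    refine tendsto_volume_conjEpi_diff (K := (L.card + 1) * N) (fun v => ?_) (fun k v => ?_)
      (fun k v => ?_) (fun v => ?_) (fun v => ?_)
    · have e1 := h0.le_supp v
      have e2 : L.card • (N * ∑ i, max (v i) 0 - N) ≤ ∑ l ∈ L, supp (E l) v :=
        Finset.card_nsmul_le_sum _ _ _ fun l _ => (hE l).le_supp v
      rw [nsmul_eq_mul] at e2
      linarith
    · exact add_le_add (supp_le_lse h0.nonempty (hr k) v) (hsle k v)
    · have := supp_le_lse h1.nonempty (hr k) v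
      have := hsle k v
      have := (inv_pos.2 (hr k)).le
      linarith
    · exact (tendsto_lse h0.nonempty v).add (hs v)
    · have h3 : Filter.Tendsto (fun k : ℕ => ((k : ℝ) + 1)⁻¹) Filter.atTop (nhds 0) := by
        simpa using tendsto_one_div_add_atTop_nhds_zero_nat (𝕜 := ℝ)
      have := ((tendsto_lse h1.nonempty v).add h3).add (hs v)
      rwa [add_zero] at this
  · refine smooth_alternating_sum_nonneg (h0.isPotential (hr k))
      ((h1.isPotential (hr k)).add_const _) (fun v => ?_) (fun l => (hE l).isPotential (hr k)) K
    have := lse_mono h0.nonempty h01 (hr k) v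
    have := inv_pos.2 (hr k)
    linarith

/-! ### Lattice polyhedra -/

section Polyhedra

variable {n : ℕ}

theorem add_mem_orthant {x y : Fin n → ℝ} (hx : x ∈ orthant n) (hy : y ∈ orthant n) :
    x + y ∈ orthant n := fun i => add_nonneg (hx i) (hy i)

theorem zero_mem_orthant : (0 : Fin n → ℝ) ∈ orthant n := fun _ => le_rfl

theorem orthant_add_orthant : orthant n + orthant n = orthant n := by
  apply Set.Subset.antisymm
  · rintro _ ⟨x, hx, y, hy, rfl⟩
    exact add_mem_orthant hx hy
  · intro x hx
    exact ⟨x, hx, 0, zero_mem_orthant, add_zero x⟩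

theorem convex_orthant : Convex ℝ (orthant n) := by
  intro x hx y hy a b ha hb _ i
  exact add_nonneg (mul_nonneg ha (hx i)) (mul_nonneg hb (hy i))

theorem isClosed_orthant : IsClosed (orthant n) := by
  rw [orthant, Set.ofPred_forall]
  exact isClosed_iInter fun i => isClosed_le continuous_const (continuous_apply i)

theorem isLatticePolyhedron_orthant : IsLatticePolyhedron (orthant n) := by
  refine ⟨{0}, Finset.singleton_nonempty _, ?_, ?_⟩
  · intro p hp i
    exact ⟨0, by simp [Finset.mem_singleton.1 hp]⟩
  · simp

namespace IsLatticePolyhedron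

variable {A B : Set (Fin n → ℝ)}

theorem add_orthant (h : IsLatticePolyhedron B) : B + orthant n = B := by
  obtain ⟨F, -, -, rfl⟩ := h
  rw [add_assoc, orthant_add_orthant]

theorem add_mem (h : IsLatticePolyhedron B) {x y : Fin n → ℝ} (hx : x ∈ B)
    (hy : y ∈ orthant n) : x + y ∈ B := by
  rw [← h.add_orthant]
  exact Set.add_mem_add hx hy

theorem mem_of_le (h : IsLatticePolyhedron B) {x y : Fin n → ℝ} (hx : x ∈ B)
    (hxy : ∀ i, x i ≤ y i) : y ∈ B := by
  have := h.add_mem hx (y := y - x) fun i => sub_nonneg.2 (hxy i)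
  rwa [add_sub_cancel] at this

theorem convex (h : IsLatticePolyhedron B) : Convex ℝ B := by
  obtain ⟨F, -, -, rfl⟩ := h
  exact (convex_convexHull ℝ _).add convex_orthant

theorem isClosed (h : IsLatticePolyhedron B) : IsClosed B := by
  obtain ⟨F, -, -, rfl⟩ := h
  rw [add_comm]
  exact isClosed_orthant.add_right_of_isCompact (F.finite_toSet.isCompact_convexHull ℝ)

theorem nonempty (h : IsLatticePolyhedron B) : B.Nonempty := by
  obtain ⟨F, ⟨f, hf⟩, -, rfl⟩ := h
  exact ⟨f + 0, Set.add_mem_add (subset_convexHull ℝ _ hf) zero_mem_orthant⟩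

theorem subset_orthant (h : IsLatticePolyhedron B) : B ⊆ orthant n := by
  obtain ⟨F, -, hF, rfl⟩ := h
  rintro _ ⟨x, hx, y, hy, rfl⟩
  refine add_mem_orthant (convexHull_min (fun p hp i => ?_) convex_orthant hx) hy
  obtain ⟨m, hm⟩ := hF p hp i
  rw [hm]
  positivity

theorem add (hA : IsLatticePolyhedron A) (hB : IsLatticePolyhedron B) :
    IsLatticePolyhedron (A + B) := by
  classical
  obtain ⟨F, hF, hFn, rfl⟩ := hA
  obtain ⟨G, hG, hGn, rfl⟩ := hB
  refine ⟨F + G, hF.add hG, fun p hp i => ?_, ?_⟩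
  · obtain ⟨f, hf, g, hg, rfl⟩ := Finset.mem_add.1 hp
    obtain ⟨a, ha⟩ := hFn f hf i
    obtain ⟨b, hb⟩ := hGn g hg i
    exact ⟨a + b, by simp [ha, hb]⟩
  · rw [Finset.coe_add, convexHull_add, add_add_add_comm, orthant_add_orthant]

theorem add_sum {ι : Type*} {B : ι → Set (Fin n → ℝ)} (hA : IsLatticePolyhedron A)
    {L : Finset ι} (hB : ∀ l ∈ L, IsLatticePolyhedron (B l)) :
    IsLatticePolyhedron (A + ∑ l ∈ L, B l) := by
  classical
  induction L using Finset.induction_on with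
  | empty => simpa using hA
  | insert a L ha ih =>
    rw [Finset.sum_insert ha, add_left_comm]
    exact (hB a (Finset.mem_insert_self _ _)).add
      (ih fun l hl => hB l (Finset.mem_insert_of_mem hl))

end IsLatticePolyhedron

/-- A set is convenient if it meets every coordinate axis. -/
def Convenient (B : Set (Fin n → ℝ)) : Prop := ∀ i, ∃ t : ℝ, Pi.single i t ∈ B

theorem Convenient.mono {A B : Set (Fin n → ℝ)} (h : Convenient A) (hAB : A ⊆ B) :
    Convenient B := fun i => (h i).imp fun _ ht => hAB ht

theorem convenient_orthant : Convenient (orthant n) := fun i => ⟨0, by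
  rw [Pi.single_zero]; exact zero_mem_orthant⟩

/-- The cube `[0, N]^n` is large enough to see all of `B`: it contains lattice points generating `B`,
and `B` contains the far ends `N e_i` of its edges on the axes. -/
def GoodAt (N : ℕ) (B : Set (Fin n → ℝ)) : Prop :=
  (∃ F : Finset (Fin n → ℝ), F.Nonempty ∧
    (∀ p ∈ F, ∀ i, ∃ m : ℕ, m ≤ N ∧ p i = (m : ℝ)) ∧ B = convexHull ℝ (↑F) + orthant n) ∧
  ∀ i, Pi.single i (N : ℝ) ∈ B

theorem GoodAt.isLatticePolyhedron {N : ℕ} {B : Set (Fin n → ℝ)} (h : GoodAt N B) :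
    IsLatticePolyhedron B := by
  obtain ⟨⟨F, h1, h2, h3⟩, -⟩ := h
  exact ⟨F, h1, fun p hp i => (h2 p hp i).imp fun _ hm => hm.2, h3⟩

theorem IsLatticePolyhedron.exists_goodAt {B : Set (Fin n → ℝ)} (h : IsLatticePolyhedron B)
    (hc : Convenient B) : ∃ N0 : ℕ, ∀ N, N0 ≤ N → GoodAt N B := by
  classical
  have hB := h
  obtain ⟨F, hF, hFn, hFB⟩ := h
  choose t ht using hc
  obtain ⟨N1, hN1⟩ : ∃ N1 : ℕ, ∀ p ∈ F, ∀ i, p i ≤ N1 := by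
    refine ⟨∑ p ∈ F, ∑ i, ⌈p i⌉₊, fun p hp i => (Nat.le_ceil _).trans ?_⟩
    exact_mod_cast (Finset.single_le_sum (f := fun i => ⌈p i⌉₊) (fun _ _ => Nat.zero_le _)
      (Finset.mem_univ i)).trans (Finset.single_le_sum (f := fun p : Fin n → ℝ => ∑ i, ⌈p i⌉₊)
        (fun _ _ => Nat.zero_le _) hp)
  obtain ⟨N2, hN2⟩ : ∃ N2 : ℕ, ∀ i, t i ≤ N2 := by
    refine ⟨∑ i, ⌈t i⌉₊, fun i => (Nat.le_ceil _).trans ?_⟩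
    exact_mod_cast Finset.single_le_sum (f := fun i => ⌈t i⌉₊) (fun _ _ => Nat.zero_le _)
      (Finset.mem_univ i)
  refine ⟨max N1 N2, fun N hN => ⟨⟨F, hF, fun p hp i => ?_, hFB⟩, fun i => ?_⟩⟩
  · obtain ⟨m, hm⟩ := hFn p hp i
    refine ⟨m, ?_, hm⟩
    have h1 := hN1 p hp i
    rw [hm] at h1
    exact (by exact_mod_cast h1 : m ≤ N1).trans ((le_max_left _ _).trans hN)
  · refine hB.mem_of_le (ht i) fun j => ?_
    have : t i ≤ N := (hN2 i).trans (by exact_mod_cast (le_max_right _ _).trans hN)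
    by_cases hj : j = i
    · subst hj; simpa using this
    · simp [hj]

/-- The lattice points of `B` in the cube `[0, N]^n`. -/
noncomputable def latticeBox (N : ℕ) (B : Set (Fin n → ℝ)) : Finset (Fin n → ℝ) := by
  classical
  exact (Finset.univ.image fun (q : Fin n → Fin (N + 1)) (i : Fin n) => ((q i : ℕ) : ℝ)).filter
    (· ∈ B)

theorem mem_latticeBox {N : ℕ} {B : Set (Fin n → ℝ)} {p : Fin n → ℝ} :
    p ∈ latticeBox N B ↔ (∀ i, ∃ m : ℕ, m ≤ N ∧ p i = m) ∧ p ∈ B := by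
  classical
  simp only [latticeBox, Finset.mem_filter, Finset.mem_image, Finset.mem_univ, true_and]
  refine and_congr_left fun _ => ⟨?_, fun h => ?_⟩
  · rintro ⟨q, rfl⟩ i
    exact ⟨q i, Nat.lt_succ_iff.1 (q i).2, rfl⟩
  · choose m hm hp using h
    exact ⟨fun i => ⟨m i, Nat.lt_succ_of_le (hm i)⟩, by ext i; simp [hp]⟩

end Polyhedra

/-! ### Alternating sums of covolumes -/

section KeyLemma

variable {d : ℕ}

/-- The covolume of a subset of the orthant; an infinite covolume is recorded as `0`, as in `MV`. -/
noncomputable def covol {n : ℕ} (X : Set (Fin n → ℝ)) : ℝ := (volume (orthant n \ X)).toReal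

theorem GoodAt.isFull {N : ℕ} (hN : 0 < N) {B : Set (Fin (d + 1) → ℝ)} (h : GoodAt N B) :
    IsFull (N : ℝ) (latticeBox N B) where
  pos := by exact_mod_cast hN
  nonneg e he k := by
    obtain ⟨m, -, hm⟩ := (mem_latticeBox.1 he).1 k
    rw [hm]; positivity
  le e he i := by
    obtain ⟨m, hmN, hm⟩ := (mem_latticeBox.1 he).1 i.succ
    rw [hm]; exact_mod_cast hmN
  corner s := by
    refine mem_latticeBox.2 ⟨fun k => ?_, ?_⟩
    · refine Fin.cases ⟨N, le_rfl, rfl⟩ (fun i => ?_) k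
      by_cases hi : i ∈ s
      · exact ⟨N, le_rfl, by simp [hi]⟩
      · exact ⟨0, Nat.zero_le _, by simp [hi]⟩
    · refine h.isLatticePolyhedron.mem_of_le (h.2 0) fun k => ?_
      refine Fin.cases (by simp) (fun i => ?_) k
      by_cases hi : i ∈ s <;> simp [hi]

/-- In directions where the slope is positive, points of `B` may be pushed out to the boundary of
the cube `[0, N]^d`; the others are controlled by the vertices of `B`. -/
theorem GoodAt.trunc_le_supp {N : ℕ} {B : Set (Fin (d + 1) → ℝ)} (h : GoodAt N B)
    {b : Fin (d + 1) → ℝ} (hb : b ∈ B) (v : Fin d → ℝ) :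
    ∑ i, (if 0 < v i then v i * N else v i * b i.succ) - b 0 ≤ supp (latticeBox N B) v := by
  have hB := h.isLatticePolyhedron
  obtain ⟨⟨F, hF, hFN, hFB⟩, -⟩ := h
  have hb' := hb
  rw [hFB] at hb'
  obtain ⟨x, hx, y, hy, rfl⟩ := hb'
  let φ : (Fin (d + 1) → ℝ) →ₗ[ℝ] ℝ :=
    (dotL (Fin.cons (-1) fun i => if 0 < v i then 0 else v i)).toLinearMap
  have hφ : ∀ z, φ z = ∑ i, (if 0 < v i then 0 else v i * z i.succ) - z 0 := by
    intro z
    simp [φ, dotL_apply, Fin.sum_univ_succ, ite_mul]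
    ring
  obtain ⟨f, hf, hxf⟩ := (φ.convexOn convex_univ).exists_ge_of_mem_convexHull
    (Set.subset_univ _) hx
  have hfB : f ∈ B := by
    rw [hFB]
    exact ⟨f, subset_convexHull ℝ _ hf, 0, zero_mem_orthant, add_zero f⟩
  let e : Fin (d + 1) → ℝ := Fin.cons (f 0) fun i => if 0 < v i then N else f i.succ
  have he : e ∈ latticeBox N B := by
    refine mem_latticeBox.2 ⟨fun k => ?_, hB.mem_of_le hfB fun k => ?_⟩
    · refine Fin.cases (hFN f hf 0) (fun i => ?_) k
      by_cases hv : 0 < v i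
      · exact ⟨N, le_rfl, by simp [e, hv]⟩
      · simpa [e, hv] using hFN f hf i.succ
    · refine Fin.cases (by simp [e]) (fun i => ?_) k
      by_cases hv : 0 < v i
      · obtain ⟨m, hm, hm'⟩ := hFN f hf i.succ
        simp only [e, hv, Fin.cons_succ, if_true, hm']
        exact_mod_cast hm
      · simp [e, hv]
  refine le_trans ?_ (aff_le_supp he v)
  have hy' : φ y ≤ 0 := by
    rw [hφ]
    have h1 : ∑ i, (if 0 < v i then 0 else v i * y i.succ) ≤ 0 := by
      refine Finset.sum_nonpos fun i _ => ?_
      split_ifs with hv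
      · exact le_rfl
      · exact mul_nonpos_of_nonpos_of_nonneg (not_lt.1 hv) (hy _)
    linarith [hy 0]
  have hsplit : ∀ z : Fin (d + 1) → ℝ,
      ∑ i, (if 0 < v i then v i * N else v i * z i.succ) - z 0 =
        φ z + ∑ i, if 0 < v i then v i * N else 0 := by
    intro z
    rw [hφ, sub_add_eq_add_sub, ← Finset.sum_add_distrib]
    congr 1
    refine Finset.sum_congr rfl fun i _ => ?_
    split_ifs <;> simp
  have haff : aff e v = φ f + ∑ i, if 0 < v i then v i * N else 0 := by
    rw [← hsplit]
    simp [aff, e, mul_ite]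
  rw [hsplit, haff, map_add]
  linarith

/-- A point outside a polyhedron is separated from it by a non-vertical hyperplane. -/
theorem IsLatticePolyhedron.exists_slope {X : Set (Fin (d + 1) → ℝ)} (hX : IsLatticePolyhedron X)
    {p : Fin (d + 1) → ℝ} (hp : p ∉ X) : ∃ v : Fin d → ℝ, ∀ b ∈ X, aff b v < aff p v := by
  obtain ⟨ℓ, u, hpu, hub⟩ := geometric_hahn_banach_point_closed hX.convex hX.isClosed hp
  obtain ⟨b0, hb0⟩ := hX.nonempty
  -- the functional is nonnegative on the recession cone
  have hnn : ∀ k, 0 ≤ ℓ (Pi.single k 1) := by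
    intro k
    by_contra! hk
    let s : ℝ := (u - ℓ b0) / ℓ (Pi.single k 1)
    have hs : 0 ≤ s := div_nonneg_of_nonpos (by linarith [hub b0 hb0]) hk.le
    have hm : b0 + s • Pi.single k (1 : ℝ) ∈ X := hX.add_mem hb0 fun j => by
      rw [Pi.smul_apply, Pi.single_apply]
      split_ifs <;> simp [hs]
    have := hub _ hm
    rw [map_add, map_smul, smul_eq_mul, div_mul_cancel₀ _ hk.ne] at this
    linarith
  have hℓ : ∀ z : Fin (d + 1) → ℝ, ℓ z = ∑ k, z k * ℓ (Pi.single k 1) := by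
    intro z
    conv_lhs => rw [← Finset.univ_sum_single z, map_sum]
    refine Finset.sum_congr rfl fun k _ => ?_
    have : (Pi.single k (z k) : Fin (d + 1) → ℝ) = z k • Pi.single k 1 := by
      rw [← Pi.single_smul, smul_eq_mul, mul_one]
    rw [this, map_smul, smul_eq_mul]
  -- a small perturbation makes the coefficient of the coordinate `0` positive
  obtain ⟨η, hη, hη'⟩ : ∃ η : ℝ, 0 < η ∧ ℓ p + η * p 0 < u := by
    refine ⟨(u - ℓ p) / (|p 0| + 1), div_pos (by linarith) (by positivity), ?_⟩
    have h1 : (u - ℓ p) / (|p 0| + 1) * p 0 < u - ℓ p := by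
      rw [div_mul_eq_mul_div, div_lt_iff₀ (by positivity)]
      have := le_abs_self (p 0)
      nlinarith
    linarith
  let a : ℝ := ℓ (Pi.single 0 1) + η
  have ha : 0 < a := add_pos_of_nonneg_of_pos (hnn 0) hη
  refine ⟨fun i => -ℓ (Pi.single i.succ 1) / a, fun b hb => ?_⟩
  have hform : ∀ z : Fin (d + 1) → ℝ,
      aff z (fun i => -ℓ (Pi.single i.succ 1) / a) = -(ℓ z + η * z 0) / a := by
    intro z
    rw [hℓ z, Fin.sum_univ_succ, aff, eq_div_iff ha.ne', sub_mul, Finset.sum_mul]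
    have : ∀ i : Fin d, -ℓ (Pi.single i.succ 1) / a * z i.succ * a =
        -(z i.succ * ℓ (Pi.single i.succ 1)) := by
      intro i; field_simp
    simp only [this, Finset.sum_neg_distrib, a]
    ring
  rw [hform, hform, div_lt_div_iff_of_pos_right ha]
  have h1 := hub b hb
  have h2 := mul_nonneg hη.le (hX.subset_orthant hb 0)
  linarith

section

variable {ι : Type*} {N : ℕ} {A : Set (Fin (d + 1) → ℝ)} {B : ι → Set (Fin (d + 1) → ℝ)}

/-- A sum of lattice polyhedra contains the epigraph of the conjugate of the sum of their support
functions. -/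
theorem conjEpi_subset (hN : 0 < N) (hA : GoodAt N A) (hB : ∀ l, GoodAt N (B l)) (L : Finset ι) :
    conjEpi (fun v => supp (latticeBox N A) v + ∑ l ∈ L, supp (latticeBox N (B l)) v) ⊆
      A + ∑ l ∈ L, B l := by
  intro p hp
  by_contra hcon
  obtain ⟨v, hv⟩ := (hA.isLatticePolyhedron.add_sum (L := L)
    fun l _ => (hB l).isLatticePolyhedron).exists_slope hcon
  obtain ⟨e, he, hev⟩ := exists_aff_eq_supp (hA.isFull hN).nonempty v
  choose e' he' hev' using fun l => exists_aff_eq_supp ((hB l).isFull hN).nonempty v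
  have hmem : e + ∑ l ∈ L, e' l ∈ A + ∑ l ∈ L, B l :=
    Set.add_mem_add (mem_latticeBox.1 he).2
      (Set.finsetSum_mem_finsetSum _ _ _ fun l _ => (mem_latticeBox.1 (he' l)).2)
  have h1 := hv _ hmem
  have h2 := hp v
  have h3 : aff (e + ∑ l ∈ L, e' l) v = aff e v + ∑ l ∈ L, aff (e' l) v := by
    simp only [aff, Pi.add_apply, Finset.sum_apply, mul_add, Finset.sum_add_distrib,
      Finset.mul_sum, Finset.sum_sub_distrib]
    rw [Finset.sum_comm]
    ring
  rw [h3, hev, Finset.sum_congr rfl fun l _ => hev' l] at h1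
  simp only [aff] at h1
  linarith

/-- Over the cube of side `(|L| + 1) N`, a sum of lattice polyhedra lies in the epigraph of
the conjugate of the sum of the support functions of their lattice points in `[0, N]^(d+1)`. -/
theorem subset_conjEpi (hA : GoodAt N A) (hB : ∀ l, GoodAt N (B l)) (L : Finset ι)
    {p : Fin (d + 1) → ℝ} (hp : p ∈ A + ∑ l ∈ L, B l) (hpc : p ∈ cyl d ((L.card + 1) * N)) :
    p ∈ conjEpi (fun v => supp (latticeBox N A) v + ∑ l ∈ L, supp (latticeBox N (B l)) v) := by
  obtain ⟨a, ha, s, hs, rfl⟩ := hp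
  obtain ⟨b, hb, rfl⟩ := (Set.mem_finsetSum _ _ _).1 hs
  intro v
  have h1 := hA.trunc_le_supp ha v
  have h2 := Finset.sum_le_sum fun l (hl : l ∈ L) => (hB l).trunc_le_supp (hb hl) v
  have h3 : ∑ i, v i * (a + ∑ l ∈ L, b l) i.succ ≤
      ∑ i, ((if 0 < v i then v i * N else v i * a i.succ) +
        ∑ l ∈ L, if 0 < v i then v i * N else v i * b l i.succ) := by
    refine Finset.sum_le_sum fun i _ => ?_
    split_ifs with hv
    · have := mul_le_mul_of_nonneg_left (hpc i).2.le hv.le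
      simp only [Finset.sum_const, nsmul_eq_mul]
      linarith
    · simp [mul_add, Finset.mul_sum]
  rw [Finset.sum_add_distrib, Finset.sum_comm] at h3
  rw [Finset.sum_sub_distrib] at h2
  simp only [Pi.add_apply, Finset.sum_apply] at h3 ⊢
  linarith

theorem single_mem_add_sum (hA : GoodAt N A) (hB : ∀ l, GoodAt N (B l)) (L : Finset ι)
    (k : Fin (d + 1)) : Pi.single k (((L.card : ℝ) + 1) * N) ∈ A + ∑ l ∈ L, B l := by
  have h : (Pi.single k (N : ℝ) : Fin (d + 1) → ℝ) + ∑ l ∈ L, Pi.single k (N : ℝ) ∈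
      A + ∑ l ∈ L, B l :=
    Set.add_mem_add (hA.2 k) (Set.finsetSum_mem_finsetSum _ _ _ fun l _ => (hB l).2 k)
  convert h using 1
  rw [Finset.sum_const, ← Pi.single_smul, ← Pi.single_add, nsmul_eq_mul]
  congr 1
  ring

end

theorem volume_orthant_diff_lt_top {n : ℕ} {X : Set (Fin n → ℝ)} (hX : IsLatticePolyhedron X)
    (hc : Convenient X) : volume (orthant n \ X) < ⊤ := by
  choose t ht using hc
  refine (measure_mono (t := Set.Icc 0 t) ?_).trans_lt isCompact_Icc.measure_lt_top
  rintro p ⟨hp, hpX⟩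
  refine ⟨hp, fun i => ?_⟩
  by_contra! hi
  refine hpX (hX.mem_of_le (ht i) fun j => ?_)
  by_cases hj : j = i
  · subst hj; simpa using hi.le
  · simpa [hj] using hp j

theorem covol_sub_covol {n : ℕ} {X Y : Set (Fin n → ℝ)} (hX : IsLatticePolyhedron X)
    (hY : IsLatticePolyhedron Y) (hc : Convenient X) (hXY : X ⊆ Y) :
    covol X - covol Y = (volume (Y \ X)).toReal := by
  have h1 : orthant n \ X = (orthant n \ Y) ∪ (Y \ X) := by
    ext p
    have hp1 : p ∈ X → p ∈ Y := fun h => hXY h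
    have hp2 : p ∈ Y → p ∈ orthant n := fun h => hY.subset_orthant h
    simp only [Set.mem_sdiff, Set.mem_union]
    tauto
  have h2 : Disjoint (orthant n \ Y) (Y \ X) :=
    Set.disjoint_left.2 fun p hp hp' => hp.2 hp'.1
  have h3 := measure_union (μ := volume) h2 (hY.isClosed.measurableSet.diff hX.isClosed.measurableSet)
  rw [← h1] at h3
  have h4 := volume_orthant_diff_lt_top hX hc
  rw [h3] at h4
  rw [covol, h3, ENNReal.toReal_add (lt_of_le_of_lt le_self_add h4).ne
    (lt_of_le_of_lt le_add_self h4).ne, covol, add_sub_cancel_left]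

theorem convenient_add {n : ℕ} {ι : Type*} {A : Set (Fin n → ℝ)} {B : ι → Set (Fin n → ℝ)}
    (cA : Convenient A) {L : Finset ι} (cB : ∀ l ∈ L, Convenient (B l)) :
    Convenient (A + ∑ l ∈ L, B l) := by
  intro i
  obtain ⟨t, ht⟩ := cA i
  choose! s hs using fun l hl => cB l hl i
  refine ⟨t + ∑ l ∈ L, s l, ?_⟩
  have h : (Pi.single i t : Fin n → ℝ) + ∑ l ∈ L, Pi.single i (s l) ∈ A + ∑ l ∈ L, B l :=
    Set.add_mem_add ht (Set.finsetSum_mem_finsetSum _ _ _ fun l hl => hs l hl)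
  convert h using 1
  rw [Pi.single_add]
  congr 1
  exact map_sum (AddMonoidHom.single (fun _ : Fin n => ℝ) i) s L

/-- The alternating sum of covolumes of `A + ∑ B l` does not increase when `A` grows. -/
theorem covol_alternating_sum_nonneg {ι : Type*} [Fintype ι] [DecidableEq ι]
    {A A' : Set (Fin (d + 1) → ℝ)} {B : ι → Set (Fin (d + 1) → ℝ)} (hA : IsLatticePolyhedron A)
    (hA' : IsLatticePolyhedron A') (hAA : A ⊆ A') (cA : Convenient A)
    (hB : ∀ l, IsLatticePolyhedron (B l)) (cB : ∀ l, Convenient (B l)) (K : Finset ι) :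
    0 ≤ ∑ L ∈ K.powerset, (-1 : ℝ) ^ (K \ L).card *
      (covol (A + ∑ l ∈ L, B l) - covol (A' + ∑ l ∈ L, B l)) := by
  obtain ⟨N1, hN1⟩ := hA.exists_goodAt cA
  obtain ⟨N2, hN2⟩ := hA'.exists_goodAt (cA.mono hAA)
  choose N3 hN3 using fun l => (hB l).exists_goodAt (cB l)
  obtain ⟨N, hN0, hNA, hNA', hNB⟩ : ∃ N : ℕ, 0 < N ∧ GoodAt N A ∧ GoodAt N A' ∧
      ∀ l, GoodAt N (B l) := by
    refine ⟨1 + N1 + N2 + ∑ l, N3 l, by omega, hN1 _ (by omega), hN2 _ (by omega),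
      fun l => hN3 l _ ?_⟩
    have := Finset.single_le_sum (f := N3) (fun _ _ => Nat.zero_le _) (Finset.mem_univ l)
    omega
  have hsub : latticeBox N A ⊆ latticeBox N A' := fun p hp =>
    mem_latticeBox.2 ⟨(mem_latticeBox.1 hp).1, hAA (mem_latticeBox.1 hp).2⟩
  have key := supp_alternating_sum_nonneg (hNA.isFull hN0) (hNA'.isFull hN0) hsub
    (fun l => (hNB l).isFull hN0) K
  refine key.trans_eq (Finset.sum_congr rfl fun L _ => ?_)
  have hX := hA.add_sum (L := L) fun l _ => hB l
  have hY := hA'.add_sum (L := L) fun l _ => hB l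
  rw [covol_sub_covol hX hY (convenient_add cA fun l _ => cB l) (Set.add_subset_add_right hAA)]
  congr 2
  refine measure_congr ?_
  have hne : ∀ᵐ p : Fin (d + 1) → ℝ, ∀ i, p i ≠ 0 :=
    ae_all_iff.2 fun i => Measure.ae_eval_ne (fun _ => volume) i 0
  filter_upwards [hne] with p hp
  refine propext ⟨?_, ?_⟩
  · rintro ⟨⟨h1, h0⟩, hc⟩
    exact ⟨conjEpi_subset hN0 hNA' hNB L h1, fun hcon => h0 (subset_conjEpi hNA hNB L hcon hc)⟩
  · rintro ⟨hpY, hpX⟩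
    have hc : p ∈ cyl d ((L.card + 1) * N) := by
      intro i
      refine ⟨lt_of_le_of_ne (hY.subset_orthant hpY _) (hp _).symm, ?_⟩
      by_contra! hi
      refine hpX (hX.mem_of_le (single_mem_add_sum hNA hNB L i.succ) fun j => ?_)
      by_cases hj : j = i.succ
      · subst hj; simpa using hi
      · simpa [hj] using hY.subset_orthant hpY j
    exact ⟨⟨subset_conjEpi hNA' hNB L hpY hc,
      fun hcon => hpX (conjEpi_subset hN0 hNA hNB L hcon)⟩, hc⟩

end KeyLemma

/-! ### Mixed volumes: nonnegativity and monotonicity -/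

section Mixed

variable {n : ℕ}

theorem sum_subset_orthant {ι : Type*} {B : ι → Set (Fin n → ℝ)} {L : Finset ι}
    (hB : ∀ l ∈ L, IsLatticePolyhedron (B l)) : ∑ l ∈ L, B l ⊆ orthant n := by
  intro p hp
  obtain ⟨b, hb, rfl⟩ := (Set.mem_finsetSum _ _ _).1 hp
  intro i
  rw [Finset.sum_apply]
  exact Finset.sum_nonneg fun l hl => (hB l hl).subset_orthant (hb hl) i

theorem orthant_add_sum {ι : Type*} {B : ι → Set (Fin n → ℝ)} {L : Finset ι} (hL : L.Nonempty)
    (hB : ∀ l ∈ L, IsLatticePolyhedron (B l)) : orthant n + ∑ l ∈ L, B l = ∑ l ∈ L, B l := by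
  classical
  obtain ⟨l, hl⟩ := hL
  rw [← Finset.add_sum_erase L B hl, ← add_assoc, add_comm (orthant n), (hB l hl).add_orthant]

/-- A polyhedron missing an axis has infinite covolume, and so does everything inside it; by
convention `covol` is then `0`. -/
theorem covol_eq_zero {X Y : Set (Fin n → ℝ)} (hXY : X ⊆ Y) (hY : IsLatticePolyhedron Y)
    (hc : ¬ Convenient Y) : covol X = 0 := by
  classical
  have hc' := hc
  simp only [Convenient, not_forall, not_exists] at hc'
  obtain ⟨k, hk⟩ := hc'
  have hn : (0 : ℝ) < n := by exact_mod_cast k.pos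
  have hsum : ∀ p ∈ Y, 1 ≤ ∑ j ∈ Finset.univ.erase k, p j := by
    have hY' := hY
    obtain ⟨F, -, hFn, hF⟩ := hY'
    intro p hp
    rw [hF] at hp
    obtain ⟨x, hx, y, hy, rfl⟩ := hp
    have hconv : Convex ℝ {q : Fin n → ℝ | 1 ≤ ∑ j ∈ Finset.univ.erase k, q j} := by
      intro q hq q' hq' a b ha hb hab
      simp only [Set.mem_ofPred_eq, Pi.add_apply, Pi.smul_apply, smul_eq_mul,
        Finset.sum_add_distrib, ← Finset.mul_sum] at hq hq' ⊢
      nlinarith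
    have hx' : x ∈ {q : Fin n → ℝ | 1 ≤ ∑ j ∈ Finset.univ.erase k, q j} := by
      refine convexHull_min (fun f hf => ?_) hconv hx
      have hfY : f ∈ Y := by
        rw [hF]
        exact ⟨f, subset_convexHull ℝ _ hf, 0, zero_mem_orthant, add_zero f⟩
      obtain ⟨j, hjk, hj⟩ : ∃ j, j ≠ k ∧ f j ≠ 0 := by
        by_contra! hcon
        refine hk (f k) ?_
        convert hfY using 1
        ext j
        by_cases hj : j = k
        · subst hj; simp
        · simp [hj, hcon j hj]
      have h1 : 1 ≤ f j := by
        obtain ⟨m, hm⟩ := hFn f hf j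
        rw [hm] at hj ⊢
        exact_mod_cast Nat.one_le_iff_ne_zero.2 (by exact_mod_cast hj)
      exact h1.trans (Finset.single_le_sum (f := fun j => f j)
        (fun i _ => hY.subset_orthant hfY i) (Finset.mem_erase.2 ⟨hjk, Finset.mem_univ j⟩))
    have hy' : 0 ≤ ∑ j ∈ Finset.univ.erase k, y j := Finset.sum_nonneg fun j _ => hy j
    simp only [Set.mem_ofPred_eq] at hx'
    simp only [Pi.add_apply, Finset.sum_add_distrib]
    linarith
  have hbox : Set.pi Set.univ (fun j => if j = k then Set.Ici (0 : ℝ) else Set.Ico 0 (1 / n)) ⊆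
      orthant n \ X := by
    intro p hp
    have hp0 : ∀ j, 0 ≤ p j := fun j => by
      have := hp j (Set.mem_univ j)
      by_cases hj : j = k
      · simpa [hj] using this
      · simp only [hj, if_false] at this; exact this.1
    refine ⟨hp0, fun hpX => ?_⟩
    have h1 := hsum p (hXY hpX)
    have h2 : ∀ j ∈ Finset.univ.erase k, p j < 1 / n := fun j hj => by
      have := hp j (Set.mem_univ j)
      simp only [(Finset.mem_erase.1 hj).1, if_false] at this
      exact this.2
    have h3 : (Finset.univ.erase k).Nonempty := by
      by_contra! hcon
      rw [hcon] at h1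
      simp at h1
      linarith
    have h4 := Finset.sum_lt_sum_of_nonempty h3 h2
    rw [Finset.sum_const, nsmul_eq_mul] at h4
    have h5 : ((Finset.univ.erase k).card : ℝ) ≤ n := by
      exact_mod_cast (Finset.card_le_univ _).trans_eq (Fintype.card_fin n)
    have h6 : ((Finset.univ.erase k).card : ℝ) * (1 / n) ≤ n * (1 / n) :=
      mul_le_mul_of_nonneg_right h5 (by positivity)
    rw [mul_one_div_cancel hn.ne'] at h6
    linarith
  have hvol : volume (Set.pi Set.univ
      (fun j => if j = k then Set.Ici (0 : ℝ) else Set.Ico 0 (1 / n))) = ⊤ := by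
    rw [volume_pi_pi, ← Finset.mul_prod_erase _ _ (Finset.mem_univ k), if_pos rfl,
      Real.volume_Ici, ENNReal.top_mul]
    refine Finset.prod_ne_zero_iff.2 fun j hj => ?_
    rw [if_neg (Finset.mem_erase.1 hj).1, Real.volume_Ico]
    simp [hn]
  have := measure_mono (μ := volume) hbox
  rw [hvol, top_le_iff] at this
  rw [covol, this, ENNReal.toReal_top]

/-- The mixed volume of the polyhedra indexed by `J`, with all signs relative to `J`. Adding the
orthant changes only the term `I = ∅`, which becomes `covol (orthant n) = 0`. -/
noncomputable def mixed (J : Finset (Fin n)) (B : Fin n → Set (Fin n → ℝ)) : ℝ :=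
  ∑ I ∈ J.powerset, (-1 : ℝ) ^ (J \ I).card * covol (orthant n + ∑ i ∈ I, B i)

theorem covol_orthant : covol (orthant n) = 0 := by simp [covol]

open Classical in
/-- The indices of the convenient polyhedra of a tuple. -/
noncomputable def convIdx (B : Fin n → Set (Fin n → ℝ)) : Finset (Fin n) :=
  {i | Convenient (B i)}

theorem mem_convIdx {B : Fin n → Set (Fin n → ℝ)} {i : Fin n} :
    i ∈ convIdx B ↔ Convenient (B i) := by simp [convIdx]

/-- Since infinite covolumes have been replaced by `0`, only the convenient polyhedra count. -/
theorem MV_eq_mixed {B : Fin n → Set (Fin n → ℝ)} (hB : ∀ i, IsLatticePolyhedron (B i)) :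
    MV B = (-1) ^ (n - (convIdx B).card) * mixed (convIdx B) B := by
  classical
  have hterm : ∀ I : Finset (Fin n), I.Nonempty → ¬ I ⊆ convIdx B → covol (∑ i ∈ I, B i) = 0 := by
    intro I _ hI
    obtain ⟨i, hiI, hi⟩ := Finset.not_subset.1 hI
    refine covol_eq_zero (Y := B i) ?_ (hB i) (by rwa [mem_convIdx] at hi)
    rw [← Finset.add_sum_erase I B hiI]
    exact (Set.add_subset_add_left (sum_subset_orthant fun l _ => hB l)).trans
      (hB i).add_orthant.subset
  have hsub : (convIdx B).powerset.filter (fun I => I.Nonempty) ⊆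
      Finset.univ.powerset.filter (fun I : Finset (Fin n) => I.Nonempty) :=
    Finset.filter_subset_filter _ (Finset.powerset_mono.2 (Finset.subset_univ _))
  have h1 : MV B = ∑ I ∈ (convIdx B).powerset.filter (fun I => I.Nonempty),
      (-1 : ℝ) ^ (n - I.card) * covol (∑ i ∈ I, B i) := by
    refine (Finset.sum_subset hsub fun I hI hI' => ?_).symm
    have hne := (Finset.mem_filter.1 hI).2
    have h0 := hterm I hne fun hcon =>
      hI' (Finset.mem_filter.2 ⟨Finset.mem_powerset.2 hcon, hne⟩)
    change _ * covol _ = 0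
    rw [h0, mul_zero]
  rw [h1, mixed, Finset.mul_sum]
  refine Finset.sum_subset_zero_on_sdiff (Finset.filter_subset _ _) (fun I hI => ?_)
    fun I hI => ?_
  · have : I = ∅ := by
      by_contra hcon
      exact (Finset.mem_sdiff.1 hI).2 (Finset.mem_filter.2
        ⟨(Finset.mem_sdiff.1 hI).1, Finset.nonempty_iff_ne_empty.2 hcon⟩)
    simp [this, covol_orthant]
  · obtain ⟨hIJ, hne⟩ := Finset.mem_filter.1 hI
    have hIJ := Finset.mem_powerset.1 hIJ
    rw [orthant_add_sum hne fun l _ => hB l, ← mul_assoc, ← pow_add, Finset.card_sdiff_of_subset hIJ]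
    have h2 := Finset.card_le_card hIJ
    have h3 := (Finset.card_le_univ (convIdx B)).trans_eq (Fintype.card_fin n)
    congr 2
    omega

/-- The terms are paired by whether they involve `i`. -/
theorem mixed_insert {B : Fin n → Set (Fin n → ℝ)} (hB : ∀ i, IsLatticePolyhedron (B i))
    {i : Fin n} {K : Finset (Fin n)} (hi : i ∉ K) :
    mixed (insert i K) B = ∑ L ∈ K.powerset, (-1 : ℝ) ^ (K \ L).card *
      (covol (B i + ∑ l ∈ L, B l) - covol (orthant n + ∑ l ∈ L, B l)) := by
  rw [mixed, Finset.sum_powerset_insert hi, ← Finset.sum_add_distrib]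
  refine Finset.sum_congr rfl fun L hL => ?_
  have hiL : i ∉ L := fun h => hi (Finset.mem_powerset.1 hL h)
  rw [Finset.sum_insert hiL, ← add_assoc, add_comm (orthant n) (B i), (hB i).add_orthant,
    Finset.insert_sdiff_of_notMem _ hiL, Finset.card_insert_of_notMem (by simp [hi]),
    Finset.insert_sdiff_insert, Finset.sdiff_insert_of_notMem hi, pow_succ]
  ring

end Mixed

section Monotone

variable {d : ℕ}

theorem covol_alternating_sum_nonneg' {ι : Type*} [Fintype ι] [DecidableEq ι]
    {A A' : Set (Fin (d + 1) → ℝ)} {B : ι → Set (Fin (d + 1) → ℝ)} (hA : IsLatticePolyhedron A)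
    (hA' : IsLatticePolyhedron A') (hAA : A ⊆ A') (cA : Convenient A)
    (hB : ∀ l, IsLatticePolyhedron (B l)) {K : Finset ι} (cB : ∀ l ∈ K, Convenient (B l)) :
    0 ≤ ∑ L ∈ K.powerset, (-1 : ℝ) ^ (K \ L).card *
      (covol (A + ∑ l ∈ L, B l) - covol (A' + ∑ l ∈ L, B l)) := by
  have h := covol_alternating_sum_nonneg (B := fun l => if l ∈ K then B l else orthant (d + 1))
    hA hA' hAA cA (fun l => by
      by_cases hl : l ∈ K
      · simpa [hl] using hB l
      · simpa [hl] using isLatticePolyhedron_orthant) (fun l => by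
      by_cases hl : l ∈ K
      · simpa [hl] using cB l hl
      · simpa [hl] using convenient_orthant) K
  refine h.trans_eq (Finset.sum_congr rfl fun L hL => ?_)
  have e : ∑ l ∈ L, (if l ∈ K then B l else orthant (d + 1)) = ∑ l ∈ L, B l :=
    Finset.sum_congr rfl fun l hl => if_pos (Finset.mem_powerset.1 hL hl)
  simp only [e]

variable {B B' : Fin (d + 1) → Set (Fin (d + 1) → ℝ)} {J : Finset (Fin (d + 1))}

theorem mixed_nonneg (hB : ∀ i, IsLatticePolyhedron (B i)) (hJ : ∀ i ∈ J, Convenient (B i)) :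
    0 ≤ mixed J B := by
  rcases J.eq_empty_or_nonempty with rfl | ⟨i, hi⟩
  · simp [mixed, covol_orthant]
  · rw [← Finset.insert_erase hi, mixed_insert hB (Finset.notMem_erase i J)]
    exact covol_alternating_sum_nonneg' (hB i) isLatticePolyhedron_orthant (hB i).subset_orthant
      (hJ i hi) hB fun l hl => hJ l (Finset.mem_of_mem_erase hl)

theorem mixed_congr {n : ℕ} {B B' : Fin n → Set (Fin n → ℝ)} {J : Finset (Fin n)}
    (h : ∀ i ∈ J, B i = B' i) : mixed J B = mixed J B' := by
  refine Finset.sum_congr rfl fun I hI => ?_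
  rw [Finset.sum_congr rfl fun i hi => h i (Finset.mem_powerset.1 hI hi)]

theorem mixed_update_le (hB : ∀ i, IsLatticePolyhedron (B i)) (hJ : ∀ i ∈ J, Convenient (B i))
    {i : Fin (d + 1)} {A : Set (Fin (d + 1) → ℝ)} (hA : IsLatticePolyhedron A) (hBA : B i ⊆ A) :
    mixed J (Function.update B i A) ≤ mixed J B := by
  by_cases hi : i ∈ J
  · have hB' : ∀ l, IsLatticePolyhedron (Function.update B i A l) := fun l => by
      by_cases hl : l = i
      · subst hl; simpa using hA
      · simpa [hl] using hB l
    have key := covol_alternating_sum_nonneg' (K := J.erase i) (hB i) hA hBA (hJ i hi) hB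
      fun l hl => hJ l (Finset.mem_of_mem_erase hl)
    rw [← sub_nonneg, ← Finset.insert_erase hi, mixed_insert hB (Finset.notMem_erase i J),
      mixed_insert hB' (Finset.notMem_erase i J), ← Finset.sum_sub_distrib]
    refine key.trans_eq (Finset.sum_congr rfl fun L hL => ?_)
    have e : ∑ l ∈ L, Function.update B i A l = ∑ l ∈ L, B l := by
      refine Finset.sum_congr rfl fun l hl => Function.update_of_ne ?_ _ _
      rintro rfl
      exact Finset.notMem_erase l J (Finset.mem_powerset.1 hL hl)
    rw [e, Function.update_self]
    ring
  · refine le_of_eq (mixed_congr fun l hl => ?_)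
    have hl' : l ≠ i := fun h => hi (h ▸ hl)
    rw [Function.update_of_ne hl']

/-- The mixed volume is antitone in the tuple of polyhedra. -/
theorem mixed_anti (hB : ∀ i, IsLatticePolyhedron (B i)) (hB' : ∀ i, IsLatticePolyhedron (B' i))
    (hJ : ∀ i ∈ J, Convenient (B i)) (hBB : ∀ i, B i ⊆ B' i) : mixed J B' ≤ mixed J B := by
  have h : ∀ S : Finset (Fin (d + 1)), mixed J (S.piecewise B' B) ≤ mixed J B := by
    intro S
    induction S using Finset.induction_on with
    | empty => simp
    | insert i S hi ih =>
      rw [Finset.piecewise_insert]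
      refine le_trans (mixed_update_le (fun l => ?_) (fun l hl => ?_) (hB' i) ?_) ih
      · by_cases h : l ∈ S <;> simp [h, hB, hB']
      · by_cases h : l ∈ S
        · simpa [h] using (hJ l hl).mono (hBB l)
        · simpa [h] using hJ l hl
      · simpa [hi] using hBB i
  simpa using h Finset.univ

end Monotone

/-! ### Adding a lattice point -/

section Update

variable {n : ℕ}

/-- Adding a lattice point to a lattice polyhedron and closing up gives a lattice polyhedron. -/
theorem IsLatticePolyhedron.convexHull_insert_add {B : Set (Fin n → ℝ)} (hB : IsLatticePolyhedron B)
    {δ : Fin n → ℝ} (hδ : ∀ j, ∃ m : ℕ, δ j = m) :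
    IsLatticePolyhedron (convexHull ℝ (B ∪ {δ}) + orthant n) := by
  classical
  have hB0 := hB
  obtain ⟨F, hF, hFn, hFB⟩ := hB
  refine ⟨insert δ F, Finset.insert_nonempty _ _, fun p hp i => ?_, ?_⟩
  · rcases Finset.mem_insert.1 hp with rfl | hp
    · exact hδ i
    · exact hFn p hp i
  · apply Set.Subset.antisymm
    · have : convexHull ℝ (B ∪ {δ}) ⊆ convexHull ℝ ↑(insert δ F) + orthant n := by
        refine convexHull_min ?_ ((convex_convexHull ℝ _).add convex_orthant)
        rintro x (hx | rfl)
        · rw [hFB] at hx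
          exact Set.add_subset_add_right (convexHull_mono (by simp)) hx
        · exact ⟨x, subset_convexHull ℝ _ (by simp), 0, zero_mem_orthant, add_zero x⟩
      refine (Set.add_subset_add_right this).trans_eq ?_
      rw [add_assoc, orthant_add_orthant]
    · refine Set.add_subset_add_right (convexHull_mono ?_)
      intro x hx
      rcases Finset.mem_insert.1 (Finset.mem_coe.1 hx) with rfl | hx
      · right; rfl
      · left
        rw [hFB]
        exact ⟨x, subset_convexHull ℝ _ hx, 0, zero_mem_orthant, add_zero x⟩

/-- A convex set `Q` containing a lattice polyhedron is dense in `Q + C`. -/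
theorem add_orthant_subset_closure {B Q : Set (Fin n → ℝ)} (hB : IsLatticePolyhedron B)
    (hQ : Convex ℝ Q) (hBQ : B ⊆ Q) : Q + orthant n ⊆ closure Q := by
  rintro _ ⟨q, hq, c, hc, rfl⟩
  obtain ⟨b, hb⟩ := hB.nonempty
  -- `(1 - ε) q + ε (b + ε⁻¹ c)` lies in `Q` and tends to `q + c`
  have hmem : ∀ ε ∈ Set.Ioo (0 : ℝ) 1, (1 - ε) • q + ε • b + c ∈ Q := by
    intro ε hε
    have h1 : b + ε⁻¹ • c ∈ Q :=
      hBQ (hB.add_mem hb fun i => mul_nonneg (inv_nonneg.2 hε.1.le) (hc i))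
    have h2 := hQ hq h1 (sub_nonneg.2 hε.2.le) hε.1.le (by ring)
    rwa [smul_add, smul_inv_smul₀ hε.1.ne', ← add_assoc] at h2
  have hlim : Filter.Tendsto (fun ε : ℝ => (1 - ε) • q + ε • b + c) (nhdsWithin 0 (Set.Ioi 0))
      (nhds (q + c)) := by
    have : Continuous fun ε : ℝ => (1 - ε) • q + ε • b + c := by fun_prop
    have := (this.tendsto 0).mono_left (nhdsWithin_le_nhds (s := Set.Ioi 0))
    simpa using this
  exact mem_closure_of_tendsto hlim
    (Filter.mem_of_superset (Ioo_mem_nhdsGT one_pos) hmem)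

/-- The set `conv (B i ∪ {δ})` need not be closed, but replacing it by the lattice polyhedron that
it generates does not change any covolume. -/
theorem MV_update_convexHull {B : Fin n → Set (Fin n → ℝ)} (hB : ∀ i, IsLatticePolyhedron (B i))
    (i : Fin n) {Q : Set (Fin n → ℝ)} (hQ : Convex ℝ Q) (hBQ : B i ⊆ Q) :
    MV (Function.update B i Q) = MV (Function.update B i (Q + orthant n)) := by
  classical
  refine Finset.sum_congr rfl fun I _ => ?_
  congr 1
  by_cases hi : i ∈ I
  · have hs : ∀ X, ∑ l ∈ I, Function.update B i X l = X + ∑ l ∈ I.erase i, B l := by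
      intro X
      rw [← Finset.add_sum_erase I _ hi, Function.update_self]
      congr 1
      exact Finset.sum_congr rfl fun l hl => Function.update_of_ne (Finset.ne_of_mem_erase hl) _ _
    rw [hs, hs]
    rcases (I.erase i).eq_empty_or_nonempty with h0 | h0
    · rw [h0, Finset.sum_empty, add_zero, add_zero]
      have hsub : Q ⊆ Q + orthant n := fun q hq => ⟨q, hq, 0, zero_mem_orthant, add_zero q⟩
      have hae : Q =ᵐ[volume] (Q + orthant n : Set (Fin n → ℝ)) := by
        refine Filter.EventuallyLE.antisymm hsub.eventuallyLE ?_
        have h1 : (Q + orthant n : Set (Fin n → ℝ)) ≤ᵐ[volume] closure Q :=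
          (add_orthant_subset_closure (hB i) hQ hBQ).eventuallyLE
        refine h1.trans ?_
        rw [ae_le_set]
        exact measure_mono_null (Set.sdiff_subset_sdiff_right interior_subset)
          (hQ.addHaar_frontier volume)
      rw [measure_congr ((Filter.EventuallyEq.refl _ _).diff hae)]
    · rw [add_assoc Q, orthant_add_sum h0 fun l _ => hB l]
  · rw [Finset.sum_congr rfl fun l hl => ?_]
    have : l ≠ i := fun h => hi (h ▸ hl)
    rw [Function.update_of_ne this, Function.update_of_ne this]

end Update

/-! ### Finiteness of the set of minimal tuples -/

section Finish

variable {n : ℕ}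

/-- The lattice points of a lattice polyhedron, as an up-set of `ℕ^n`. -/
def latticeUpper (B : {B : Set (Fin n → ℝ) // IsLatticePolyhedron B}) : UpperSet (Fin n → ℕ) where
  carrier := {q | (fun i => (q i : ℝ)) ∈ B.1}
  upper' := fun _ _ hpq hp => B.2.mem_of_le hp fun i => by exact_mod_cast hpq i

theorem subset_of_latticeUpper_le {B B' : {B : Set (Fin n → ℝ) // IsLatticePolyhedron B}}
    (h : latticeUpper B' ≤ latticeUpper B) : B.1 ⊆ B'.1 := by
  obtain ⟨F, -, hFn, hFB⟩ := B.2
  rw [← B'.2.add_orthant, hFB]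
  refine Set.add_subset_add_right (convexHull_min (fun f hf => ?_) B'.2.convex)
  choose m hm using hFn f hf
  have hfB : f ∈ B.1 := by
    rw [hFB]; exact ⟨f, subset_convexHull ℝ _ hf, 0, zero_mem_orthant, add_zero f⟩
  have hfm : f = fun i => (m i : ℝ) := funext hm
  have : m ∈ latticeUpper B := by
    rw [hfm] at hfB; exact hfB
  rw [hfm]
  exact h this

theorem convIdx_mono {B B' : Fin n → Set (Fin n → ℝ)} (h : ∀ i, B i ⊆ B' i) :
    convIdx B ⊆ convIdx B' := fun i hi =>
  mem_convIdx.2 ((mem_convIdx.1 hi).mono (h i))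

/-- Two minimal tuples with the same positive mixed volume and the same convenient members are
incomparable. -/
theorem eq_of_isMinimalTuple {d : ℕ} {B B' : Fin (d + 1) → Set (Fin (d + 1) → ℝ)} {V : ℝ}
    (hV : 0 < V) (hB : ∀ i, IsLatticePolyhedron (B i)) (hB' : ∀ i, IsLatticePolyhedron (B' i))
    (hmin : IsMinimalTuple B V) (hmin' : IsMinimalTuple B' V) (hBB : ∀ i, B i ⊆ B' i)
    (hconv : convIdx B = convIdx B') : B = B' := by
  classical
  by_contra hne
  obtain ⟨i, hi⟩ := Function.ne_iff.1 hne
  have hnot : ¬ B' i ⊆ B i := fun h => hi ((hBB i).antisymm h)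
  obtain ⟨F, -, hFn, hFB⟩ := hB' i
  obtain ⟨δ, hδF, hδ⟩ : ∃ δ ∈ F, δ ∉ B i := by
    by_contra! hcon
    refine hnot ?_
    rw [hFB, ← (hB i).add_orthant]
    exact Set.add_subset_add_right (convexHull_min hcon (hB i).convex)
  have hδB' : δ ∈ B' i := by
    rw [hFB]; exact ⟨δ, subset_convexHull ℝ _ hδF, 0, zero_mem_orthant, add_zero δ⟩
  have hlt := hmin.2 i δ (fun j => (hFn δ hδF j).imp' (fun m : ℕ => (m : ℤ)) (by simp))
    ((hB' i).subset_orthant hδB') hδ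
  set Q := convexHull ℝ (B i ∪ {δ}) with hQ
  have hBQ : B i ⊆ Q := Set.subset_union_left.trans (subset_convexHull ℝ _)
  rw [MV_update_convexHull hB i (convex_convexHull ℝ _) hBQ] at hlt
  have hP : IsLatticePolyhedron (Q + orthant (d + 1)) :=
    (hB i).convexHull_insert_add (hFn δ hδF)
  set U := Function.update B i (Q + orthant (d + 1)) with hU
  have hUl : ∀ l, IsLatticePolyhedron (U l) := fun l => by
    by_cases hl : l = i
    · subst hl; simpa [hU] using hP
    · simpa [hU, hl] using hB l
  have hBU : ∀ l, B l ⊆ U l := fun l => by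
    by_cases hl : l = i
    · subst hl
      rw [hU, Function.update_self]
      exact fun x hx => ⟨x, hBQ hx, 0, zero_mem_orthant, add_zero x⟩
    · simp [hU, hl]
  have hUB' : ∀ l, U l ⊆ B' l := fun l => by
    by_cases hl : l = i
    · subst hl
      rw [hU, Function.update_self, ← (hB' l).add_orthant]
      refine Set.add_subset_add_right (convexHull_min ?_ (hB' l).convex)
      exact Set.union_subset (hBB l) (Set.singleton_subset_iff.2 hδB')
    · simpa [hU, hl] using hBB l
  have hcU : convIdx U = convIdx B' :=
    (convIdx_mono hUB').antisymm (hconv ▸ convIdx_mono hBU)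
  have hV' := hmin'.1
  rw [MV_eq_mixed hB'] at hV'
  rw [MV_eq_mixed hUl, hcU, ← hV'] at hlt
  have hJU : ∀ l ∈ convIdx B', Convenient (U l) := fun l hl => mem_convIdx.1 (hcU ▸ hl)
  have h1 := mixed_anti hUl hB' hJU hUB'
  have h2 := mixed_nonneg hB' (J := convIdx B') fun l hl => mem_convIdx.1 hl
  rcases neg_one_pow_eq_or ℝ (d + 1 - (convIdx B').card) with h | h
  · rw [h] at hlt
    linarith
  · -- a negative sign is impossible since the mixed volume is positive
    rw [h] at hV'
    linarith

end Finish

theorem stmt_11 {n : ℕ} (hn : 1 ≤ n) (V : ℕ) (hV : 1 ≤ V) :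
    {B : Fin n → Set (Fin n → ℝ) |
      (∀ i, IsLatticePolyhedron (B i)) ∧ IsMinimalTuple B V}.Finite := by
  obtain ⟨d, rfl⟩ : ∃ d, n = d + 1 := ⟨n - 1, by omega⟩
  have hV0 : (0 : ℝ) < V := by exact_mod_cast hV
  let S : Finset (Fin (d + 1)) → Set (Fin (d + 1) → {B : Set (Fin (d + 1) → ℝ) //
      IsLatticePolyhedron B}) := fun J =>
    {B | IsMinimalTuple (fun i => (B i).1) V ∧ convIdx (fun i => (B i).1) = J}
  let Φ : (Fin (d + 1) → {B : Set (Fin (d + 1) → ℝ) // IsLatticePolyhedron B}) →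
      Fin (d + 1) → UpperSet (Fin (d + 1) → ℕ) := fun B i => latticeUpper (B i)
  have key : ∀ J, ∀ B ∈ S J, ∀ B' ∈ S J, Φ B' ≤ Φ B → B = B' := by
    intro J B hB B' hB' h
    have := eq_of_isMinimalTuple hV0 (fun i => (B i).2) (fun i => (B' i).2) hB.1 hB'.1
      (fun i => subset_of_latticeUpper_le (h i)) (hB.2.trans hB'.2.symm)
    exact funext fun i => Subtype.ext (congrFun this i)
  have hfin : ∀ J, (S J).Finite := by
    intro J
    have := upperSet_wellQuasiOrderedLE (d + 1)
    refine Set.Finite.of_finite_image (f := Φ) ?_ fun B hB B' hB' h => key J B hB B' hB' h.ge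
    refine WellQuasiOrderedLE.finite_of_isAntichain ?_
    rintro _ ⟨B, hB, rfl⟩ _ ⟨B', hB', rfl⟩ hne hle
    exact hne (congrArg Φ (key J B' hB' B hB hle).symm)
  refine ((Set.finite_iUnion hfin).image fun B i => (B i).1).subset ?_
  rintro B ⟨hB, hmin⟩
  exact ⟨fun i => ⟨B i, hB i⟩, Set.mem_iUnion.2 ⟨convIdx B, hmin, rfl⟩, rfl⟩
end
end

section
/- Let n ≥ 1 and m ∈ {1, …, n}. Consider the tuple of lattice polyhedra in ℝ^n consisting of m copies of C_{1,…,1,2,…,2} (with m−1 entries equal to 1 followed by n−m+1 entries equal to 2) and n−m copies of C_{2,…,2}. Then the relative mixed volume of this tuple equals 2^{n−m+1}. -/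
/-!
Put `k = m - 1`, and let `u`, `v` be the sums of the first `k` and of the remaining `n - k`
coordinates. The Minkowski sum of `s` copies of `C_{1,…,1,2,…,2}` and `t` copies of `C_{2,…,2}` is
the part of the orthant where `u + v ≥ s + 2t` and `2u + v ≥ 2(s + t)` (`sum_eq_cornerSum`); this is
a statement about the pair `(u, v)` only, since a decomposition of `(u, v)` lifts to `x`.

The complement in the orthant is the disjoint union of the simplex `2u + v < 2(s + t)`, of volume
`2^(n-k) (s + t)^n / n!`, and of the region where `2u + v ≥ 2(s + t)` but `u + v < s + 2t`. That
region lies in `u > s`, and its fibre over a given `u` depends on `s` only through `w = u - s`.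
As `u` has density `u^(k-1) / (k-1)!` on the orthant of `ℝ^k`, the volume of the region is an
integral over `w > 0` of `(s + w)^(k-1) / (k-1)!` against a function independent of `s`, hence a
polynomial in `s` of degree less than `k` (`volume_remainder_polynomial`).

The relative mixed volume is an `n`-th order finite difference, of order `m = k + 1` in `s` and
`n - m` in `t`. It kills the second contribution, already through the differences in `s`, and it
turns `(s + t)^n` into `n!`, which leaves `2^(n-k) = 2^(n-m+1)`.
-/


open Pointwise MeasureTheory

noncomputable section

/-! ### Alternating sums over subsets -/

lemma sum_powerset_pow_eq_fwdDiff {β : Type*} (X : Finset β) (j : ℕ) :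
    ∑ I ∈ X.powerset, (-1 : ℝ) ^ (X.card - I.card) * (I.card : ℝ) ^ j
      = (fwdDiff (1 : ℝ))^[X.card] (fun r : ℝ => r ^ j) 0 := by
  rw [Finset.sum_powerset_apply_card (fun c => (-1 : ℝ) ^ (X.card - c) * (c : ℝ) ^ j),
    fwdDiff_iter_eq_sum_shift]
  refine Finset.sum_congr rfl fun c _ => ?_
  simp only [nsmul_eq_mul, zsmul_eq_mul]
  push_cast
  ring

lemma sum_powerset_pow_of_lt {β : Type*} (X : Finset β) {j : ℕ} (h : j < X.card) :
    ∑ I ∈ X.powerset, (-1 : ℝ) ^ (X.card - I.card) * (I.card : ℝ) ^ j = 0 := by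
  rw [sum_powerset_pow_eq_fwdDiff, fwdDiff_iter_pow_eq_zero_of_lt h]
  rfl

lemma sum_powerset_pow_card {β : Type*} (X : Finset β) :
    ∑ I ∈ X.powerset, (-1 : ℝ) ^ (X.card - I.card) * (I.card : ℝ) ^ X.card
      = X.card.factorial := by
  rw [sum_powerset_pow_eq_fwdDiff, fwdDiff_iter_eq_factorial]
  rfl

/-- A function of `(#(I ∩ M), #(I \ M))` that is polynomial of degree `< #M` in the first
variable is killed by the alternating sum over all subsets `I`. -/
lemma sum_powerset_two_eq_zero {β : Type*} [Fintype β] [DecidableEq β] (M : Finset β) (k : ℕ)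
    (hk : k < M.card) (c : ℕ → ℕ → ℝ) :
    ∑ I ∈ (Finset.univ : Finset β).powerset, (-1 : ℝ) ^ (Fintype.card β - I.card) *
      ∑ j ∈ Finset.range k, c (I \ M).card j * ((I ∩ M).card : ℝ) ^ j = 0 := by
  have h1 : ∑ I ∈ (Finset.univ : Finset β).powerset, (-1 : ℝ) ^ (Fintype.card β - I.card) *
      ∑ j ∈ Finset.range k, c (I \ M).card j * ((I ∩ M).card : ℝ) ^ j
      = ∑ p ∈ Mᶜ.powerset ×ˢ M.powerset, (-1 : ℝ) ^ (Fintype.card β - (p.1.card + p.2.card)) *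
      ∑ j ∈ Finset.range k, c p.1.card j * (p.2.card : ℝ) ^ j := by
    refine Finset.sum_bij' (fun I _ => (I \ M, I ∩ M)) (fun p _ => p.1 ∪ p.2) ?_ ?_ ?_ ?_ ?_
    · intro I _
      simp only [Finset.mem_product, Finset.mem_powerset]
      exact ⟨fun x => by simp, Finset.inter_subset_right⟩
    · intro p _; simp
    · intro I _; exact Finset.sdiff_union_inter I M
    · rintro ⟨K, J⟩ h
      simp only [Finset.mem_product, Finset.mem_powerset] at h
      ext x
      · have a := @h.1 x
        have b := @h.2 x
        simp at a b ⊢; tauto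
      · have a := @h.1 x
        have b := @h.2 x
        simp at a b ⊢; tauto
    · intro I _
      simp only [Finset.card_sdiff_add_card_inter]
  rw [h1, Finset.sum_product]
  refine Finset.sum_eq_zero fun K hK => ?_
  have hKc : K.card ≤ Fintype.card β - M.card := by
    rw [← Finset.card_compl]; exact Finset.card_le_card (Finset.mem_powerset.1 hK)
  have hM := M.card_le_univ
  simp only [Finset.mul_sum]
  rw [Finset.sum_comm]
  refine Finset.sum_eq_zero fun j hj => ?_
  have h2 := sum_powerset_pow_of_lt M ((Finset.mem_range.1 hj).trans hk)
  calc _ = ∑ J ∈ M.powerset, ((-1 : ℝ) ^ (Fintype.card β - M.card - K.card) * c K.card j) *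
        ((-1 : ℝ) ^ (M.card - J.card) * (J.card : ℝ) ^ j) := by
        refine Finset.sum_congr rfl fun J hJ => ?_
        have := Finset.card_le_card (Finset.mem_powerset.1 hJ)
        rw [show Fintype.card β - (K.card + J.card)
          = (Fintype.card β - M.card - K.card) + (M.card - J.card) by omega, pow_add]
        ring
    _ = 0 := by rw [← Finset.mul_sum, h2, mul_zero]

/-! ### The orthant and its corner simplices -/

open scoped ENNReal in
lemma lintegral_pow_div_factorial (k : ℕ) {u : ℝ} (hu : 0 ≤ u) :
    ∫⁻ a in Set.Icc 0 u, ENNReal.ofReal ((u - a) ^ k / k.factorial)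
      = ENNReal.ofReal (u ^ (k + 1) / (k + 1).factorial) := by
  rw [← ofReal_integral_eq_lintegral_ofReal]
  · rw [integral_Icc_eq_integral_Ioc, ← intervalIntegral.integral_of_le hu,
      intervalIntegral.integral_comp_sub_left (fun a => a ^ k / (k.factorial : ℝ)) u]
    congr 1
    simp [Nat.factorial_succ]
    field_simp
  · exact (Continuous.continuousOn (by fun_prop)).integrableOn_Icc
  · filter_upwards [ae_restrict_mem measurableSet_Icc] with a ha
    have : 0 ≤ u - a := sub_nonneg.2 ha.2
    simp only [Pi.zero_apply]; positivity

lemma measurableSet_nonneg (ι : Type*) [Fintype ι] :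
    MeasurableSet {y : ι → ℝ | ∀ i, 0 ≤ y i} := by
  rw [Set.ofPred_forall]
  exact MeasurableSet.iInter fun i => measurableSet_le measurable_const (measurable_pi_apply i)

open scoped ENNReal in
lemma lintegral_orthant_fin (k : ℕ) (f : ℝ → ℝ≥0∞) (hf : Measurable f) :
    ∫⁻ y in {y : Fin (k + 1) → ℝ | ∀ i, 0 ≤ y i}, f (∑ i, y i)
      = ∫⁻ u in Set.Ici 0, ENNReal.ofReal (u ^ k / k.factorial) * f u := by
  induction k generalizing f with
  | zero =>
    have := (volume_preserving_funUnique (Fin 1) ℝ).setLIntegral_comp_preimage_emb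
      (MeasurableEquiv.measurableEmbedding _) f (Set.Ici 0)
    simp only [pow_zero, Nat.factorial_zero, Nat.cast_one, div_one, ENNReal.ofReal_one, one_mul]
    rw [← this]
    congr 1
    · congr 1
      ext y; simp [MeasurableEquiv.funUnique]
    · ext y; simp [MeasurableEquiv.funUnique]
  | succ k ih =>
    have h1 := (volume_preserving_piFinSuccAbove (fun _ : Fin (k + 2) => ℝ)
      0).setLIntegral_comp_preimage_emb (MeasurableEquiv.measurableEmbedding _)
      (fun p => f (p.1 + ∑ i, p.2 i))
      (Set.Ici (0:ℝ) ×ˢ {y : Fin (k + 1) → ℝ | ∀ i, 0 ≤ y i})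
    have h2 : ∫⁻ y in {y : Fin (k + 2) → ℝ | ∀ i, 0 ≤ y i}, f (∑ i, y i) =
        ∫⁻ p in (Set.Ici (0:ℝ) ×ˢ {y : Fin (k + 1) → ℝ | ∀ i, 0 ≤ y i}),
          f (p.1 + ∑ i, p.2 i) := by
      rw [← h1]
      congr 1
      · congr 1
        ext y
        simp [MeasurableEquiv.piFinSuccAbove, Fin.forall_fin_succ, Fin.tail]
      · ext y; simp [MeasurableEquiv.piFinSuccAbove, Fin.sum_univ_succ, Fin.tail]
    rw [h2, Measure.volume_eq_prod, ← Measure.prod_restrict, lintegral_prod]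
    swap
    · exact (hf.comp (by fun_prop)).aemeasurable
    have h3 : ∀ a : ℝ, ∫⁻ y in {y : Fin (k + 1) → ℝ | ∀ i, 0 ≤ y i}, f (a + ∑ i, y i)
        = ∫⁻ u, (Set.Ici a).indicator
            (fun u => ENNReal.ofReal ((u - a) ^ k / k.factorial) * f u) u := by
      intro a
      rw [ih (fun u => f (a + u)) (hf.comp (by fun_prop)),
        ← lintegral_indicator measurableSet_Ici,
        ← lintegral_sub_right_eq_self _ a]
      congr 1; ext u
      by_cases h : a ≤ u
      · simp [h]
      · simp [h]
    simp only [h3]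
    have h4 : Measurable (fun p : ℝ × ℝ => (Set.Ici p.1).indicator
            (fun u => ENNReal.ofReal ((u - p.1) ^ k / k.factorial) * f u) p.2) := by
      have : (fun p : ℝ × ℝ => (Set.Ici p.1).indicator
            (fun u => ENNReal.ofReal ((u - p.1) ^ k / k.factorial) * f u) p.2)
          = {p : ℝ × ℝ | p.1 ≤ p.2}.indicator
            (fun p => ENNReal.ofReal ((p.2 - p.1) ^ k / k.factorial) * f p.2) := by
        ext p; simp [Set.indicator]
      rw [this]
      refine Measurable.indicator ?_ (measurableSet_le measurable_fst measurable_snd)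
      exact (ENNReal.measurable_ofReal.comp (by fun_prop)).mul (hf.comp measurable_snd)
    rw [lintegral_lintegral_swap h4.aemeasurable]
    rw [← lintegral_indicator measurableSet_Ici]
    congr 1; ext u
    by_cases hu : 0 ≤ u
    · rw [Set.indicator_of_mem (Set.mem_Ici.2 hu), ← lintegral_pow_div_factorial k hu,
        ← lintegral_mul_const _ (by fun_prop), ← lintegral_indicator measurableSet_Ici,
        ← lintegral_indicator measurableSet_Icc]
      congr 1; ext a
      simp only [Set.indicator, Set.mem_Ici, Set.mem_Icc]
      split_ifs <;> tauto
    · rw [Set.indicator_of_notMem (by simpa using hu), ← lintegral_indicator measurableSet_Ici]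
      refine (lintegral_congr fun a => ?_).trans lintegral_zero
      simp only [Set.indicator, Set.mem_Ici]
      split_ifs with h5 h6
      · exact absurd (h5.trans h6) hu
      · rfl
      · rfl

open scoped ENNReal in
/-- The pushforward of Lebesgue measure on the orthant of `ℝ^{k+1}` under the coordinate sum has
density `u ^ k / k!` on `[0, ∞)`. -/
lemma lintegral_orthant {ι : Type*} [Fintype ι] (k : ℕ) (hk : Fintype.card ι = k + 1)
    (f : ℝ → ℝ≥0∞) (hf : Measurable f) :
    ∫⁻ y in {y : ι → ℝ | ∀ i, 0 ≤ y i}, f (∑ i, y i)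
      = ∫⁻ u in Set.Ici 0, ENNReal.ofReal (u ^ k / k.factorial) * f u := by
  rw [← lintegral_orthant_fin k f hf]
  let e : Fin (k + 1) ≃ ι := (Fintype.equivFinOfCardEq hk).symm
  rw [← (volume_measurePreserving_piCongrLeft (fun _ => ℝ) e).setLIntegral_comp_preimage_emb
      (MeasurableEquiv.measurableEmbedding _)]
  congr 1
  · congr 1
    ext y
    simp only [Set.preimage_ofPred_eq, Set.mem_ofPred_eq]
    rw [← e.forall_congr_right]
    simp [MeasurableEquiv.piCongrLeft, Equiv.piCongrLeft_apply]
  · ext y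
    rw [← e.sum_comp]
    simp [MeasurableEquiv.piCongrLeft, Equiv.piCongrLeft_apply]

/-- Volume of a weighted corner simplex. -/
lemma volume_weighted_simplex {n : ℕ} (hn : 1 ≤ n) (c : Fin n → ℝ) (hc : ∀ i, 0 < c i) {r : ℝ}
    (hr : 0 ≤ r) :
    volume {x : Fin n → ℝ | (∀ i, 0 ≤ x i) ∧ ∑ i, c i * x i < r}
      = ENNReal.ofReal (r ^ n / (n.factorial * ∏ i, c i)) := by
  obtain ⟨k, rfl⟩ : ∃ k, n = k + 1 := ⟨n - 1, by omega⟩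
  have hS : MeasurableSet {y : Fin (k + 1) → ℝ | ∑ i, y i < r} :=
    measurableSet_lt (by fun_prop) measurable_const
  have h1 : volume {x : Fin (k + 1) → ℝ | (∀ i, 0 ≤ x i) ∧ ∑ i, x i < r}
      = ENNReal.ofReal (r ^ (k + 1) / (k + 1).factorial) := by
    have h2 := lintegral_orthant (ι := Fin (k + 1)) k (by simp) ((Set.Iio r).indicator 1)
      (measurable_one.indicator measurableSet_Iio)
    have h3 : (fun y : Fin (k + 1) → ℝ => (Set.Iio r).indicator (1 : ℝ → ENNReal) (∑ i, y i))
        = {y : Fin (k + 1) → ℝ | ∑ i, y i < r}.indicator 1 := by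
      ext y; simp [Set.indicator]
    rw [h3, lintegral_indicator_one hS, Measure.restrict_apply hS] at h2
    rw [show {x : Fin (k + 1) → ℝ | (∀ i, 0 ≤ x i) ∧ ∑ i, x i < r} =
      {y : Fin (k + 1) → ℝ | ∑ i, y i < r} ∩ {y | ∀ i, 0 ≤ y i} by ext; simp [and_comm], h2,
      ← lintegral_pow_div_factorial k hr, ← lintegral_indicator measurableSet_Ici,
      ← lintegral_indicator measurableSet_Icc, ← lintegral_sub_left_eq_self _ r]
    refine lintegral_congr_ae ?_
    have : ∀ᵐ a : ℝ, a ≠ 0 := by simp [ae_iff]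
    filter_upwards [this] with a ha
    simp only [Set.indicator, Set.mem_Ici, Set.mem_Icc, Set.mem_Iio, Pi.one_apply]
    by_cases h5 : 0 < a
    · by_cases h6 : a ≤ r <;> simp [h5, h5.le, h6]
    · have : ¬ 0 ≤ a := fun h => h5 (lt_of_le_of_ne h ha.symm)
      simp [h5, this]
  have hdet : LinearMap.det (Matrix.toLin' (Matrix.diagonal c)) = ∏ i, c i := by
    rw [LinearMap.det_toLin', Matrix.det_diagonal]
  have hpos : 0 < ∏ i, c i := Finset.prod_pos fun i _ => hc i
  have h7 := Measure.addHaar_preimage_linearMap (volume : Measure (Fin (k + 1) → ℝ))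
    (f := Matrix.toLin' (Matrix.diagonal c)) (by rw [hdet]; exact hpos.ne')
    {x : Fin (k + 1) → ℝ | (∀ i, 0 ≤ x i) ∧ ∑ i, x i < r}
  rw [hdet, h1, ← ENNReal.ofReal_mul (abs_nonneg _), abs_of_pos (inv_pos.2 hpos)] at h7
  convert h7 using 2
  · ext x
    simp [Matrix.mulVec_diagonal, mul_nonneg_iff_of_pos_left, hc]
  · field_simp

/-! ### Covolume of the Minkowski sums -/

/-- Sum of the first `k` coordinates. -/
def uSum {n : ℕ} (k : ℕ) (x : Fin n → ℝ) : ℝ := ∑ i : {i : Fin n // (i : ℕ) < k}, x i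

/-- Sum of the coordinates from the `k`-th on (counting from `0`). -/
def vSum {n : ℕ} (k : ℕ) (x : Fin n → ℝ) : ℝ := ∑ i : {i : Fin n // ¬ (i : ℕ) < k}, x i

/-- The Minkowski sum of `s` copies of `C_{1,…,1,2,…,2}` (with `k` ones) and `t` copies of
`C_{2,…,2}`, given by its two facet inequalities. -/
def cornerSum (n k : ℕ) (s t : ℝ) : Set (Fin n → ℝ) :=
  {x | (∀ i, 0 ≤ x i) ∧ s + 2 * t ≤ uSum k x + vSum k x ∧
    2 * (s + t) ≤ 2 * uSum k x + vSum k x}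

/-- The part of the complement of `cornerSum n k s t` in the orthant on which only the inequality
`s + 2 * t ≤ u + v` fails. -/
def remainder (n k : ℕ) (s t : ℝ) : Set (Fin n → ℝ) :=
  {x | (∀ i, 0 ≤ x i) ∧ 2 * (s + t) ≤ 2 * uSum k x + vSum k x ∧
    uSum k x + vSum k x < s + 2 * t}

lemma uSum_nonneg {n : ℕ} (k : ℕ) {x : Fin n → ℝ} (hx : ∀ i, 0 ≤ x i) : 0 ≤ uSum k x :=
  Finset.sum_nonneg fun i _ => hx i

lemma vSum_nonneg {n : ℕ} (k : ℕ) {x : Fin n → ℝ} (hx : ∀ i, 0 ≤ x i) : 0 ≤ vSum k x :=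
  Finset.sum_nonneg fun i _ => hx i

@[fun_prop]
lemma measurable_uSum {n : ℕ} (k : ℕ) : Measurable (uSum k : (Fin n → ℝ) → ℝ) := by
  unfold uSum; fun_prop

@[fun_prop]
lemma measurable_vSum {n : ℕ} (k : ℕ) : Measurable (vSum k : (Fin n → ℝ) → ℝ) := by
  unfold vSum; fun_prop

lemma sum_eq_uSum_add_vSum {n : ℕ} (k : ℕ) (x : Fin n → ℝ) :
    ∑ i, x i = uSum k x + vSum k x :=
  (Fintype.sum_subtype_add_sum_subtype (fun i : Fin n => (i : ℕ) < k) x).symm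

lemma sum_weighted {n : ℕ} (k : ℕ) (a b : ℝ) (x : Fin n → ℝ) :
    ∑ i : Fin n, (if (i : ℕ) < k then a else b) * x i = a * uSum k x + b * vSum k x := by
  rw [← Fintype.sum_subtype_add_sum_subtype (fun i : Fin n => (i : ℕ) < k), uSum, vSum,
    Finset.mul_sum, Finset.mul_sum]
  congr 1
  · exact Finset.sum_congr rfl fun i _ => by rw [if_pos i.2]
  · exact Finset.sum_congr rfl fun i _ => by rw [if_neg i.2]

lemma card_lt_subtype {n k : ℕ} (hk : k ≤ n) :
    Fintype.card {i : Fin n // (i : ℕ) < k} = k := by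
  rw [Fintype.card_subtype]
  simp [Fin.card_filter_val_lt, hk]

lemma measurableSet_remainder (n k : ℕ) (s t : ℝ) : MeasurableSet (remainder n k s t) := by
  have h1 : MeasurableSet {x : Fin n → ℝ | 2 * (s + t) ≤ 2 * uSum k x + vSum k x} :=
    measurableSet_le (by fun_prop) (by fun_prop)
  have h2 : MeasurableSet {x : Fin n → ℝ | uSum k x + vSum k x < s + 2 * t} :=
    measurableSet_lt (by fun_prop) (by fun_prop)
  exact (measurableSet_nonneg _).inter (h1.inter h2)

lemma volume_sum_lt_ne_top (n : ℕ) (r : ℝ) :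
    volume {x : Fin n → ℝ | (∀ i, 0 ≤ x i) ∧ ∑ i, x i < r} ≠ ⊤ := by
  refine ne_top_of_le_ne_top ?_ (measure_mono (t := Set.Icc (0 : Fin n → ℝ) (fun _ => r)) ?_)
  · exact isCompact_Icc.measure_lt_top.ne
  · rintro x ⟨hx, hr⟩
    refine ⟨hx, fun i => ?_⟩
    exact (Finset.single_le_sum (fun j _ => hx j) (Finset.mem_univ i)).trans hr.le

lemma volume_remainder_ne_top (n k : ℕ) (s t : ℝ) : volume (remainder n k s t) ≠ ⊤ := by
  refine ne_top_of_le_ne_top (volume_sum_lt_ne_top n (s + 2 * t)) (measure_mono ?_)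
  rintro x ⟨hx, _, h⟩
  exact ⟨hx, by rwa [sum_eq_uSum_add_vSum k]⟩

lemma remainder_zero_left (n : ℕ) {s t : ℝ} (hs : 0 ≤ s) : remainder n 0 s t = ∅ := by
  refine Set.eq_empty_of_forall_notMem ?_
  rintro x ⟨hx, h1, h2⟩
  have : uSum 0 x = 0 := Finset.sum_eq_zero fun i _ => absurd i.2 (Nat.not_lt_zero _)
  linarith

open scoped ENNReal in
/-- Fibering `remainder` over the sum `u` of the first `k + 1` coordinates: the fibre depends only on
`u - s` and is empty for `u ≤ s`, so after the shift `u = s + w` the parameter `s` survives only in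
the density `(s + w) ^ k / k!`. -/
lemma volume_remainder_eq (n k : ℕ) (hk : k + 1 ≤ n) (t : ℝ) :
    ∃ G : ℝ → ℝ≥0∞, Measurable G ∧ ∀ s : ℝ, 0 ≤ s → volume (remainder n (k + 1) s t)
      = ∫⁻ w in Set.Ici 0, ENNReal.ofReal ((s + w) ^ k / k.factorial) * G w := by
  let q : Fin n → Prop := fun i => (i : ℕ) < k + 1
  let S : Set (ℝ × ({i // ¬ q i} → ℝ)) :=
    {p | (∀ i, 0 ≤ p.2 i) ∧ 2 * t ≤ 2 * p.1 + ∑ i, p.2 i ∧ p.1 + ∑ i, p.2 i < 2 * t}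
  have hS : MeasurableSet S := by
    have h1 : MeasurableSet {p : ℝ × ({i // ¬ q i} → ℝ) | 2 * t ≤ 2 * p.1 + ∑ i, p.2 i} :=
      measurableSet_le (by fun_prop) (by fun_prop)
    have h2 : MeasurableSet {p : ℝ × ({i // ¬ q i} → ℝ) | p.1 + ∑ i, p.2 i < 2 * t} :=
      measurableSet_lt (by fun_prop) (by fun_prop)
    exact (measurable_snd (measurableSet_nonneg _)).inter (h1.inter h2)
  have hG : Measurable fun w => volume (Prod.mk w ⁻¹' S) := measurable_measure_prodMk_left hS
  have hG0 : ∀ w ≤ 0, volume (Prod.mk w ⁻¹' S) = 0 := by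
    intro w hw
    rw [Set.eq_empty_of_forall_notMem (s := Prod.mk w ⁻¹' S), measure_empty]
    rintro z ⟨_, h1, h2⟩
    simp only at h1 h2
    linarith
  refine ⟨fun w => volume (Prod.mk w ⁻¹' S), hG, fun s hs => ?_⟩
  let T : Set (({i // q i} → ℝ) × ({i // ¬ q i} → ℝ)) :=
    {p | (∀ i, 0 ≤ p.1 i) ∧ (∑ i, p.1 i - s, p.2) ∈ S}
  have hT : MeasurableSet T := by
    refine (measurable_fst (measurableSet_nonneg _)).inter ?_
    have : Measurable fun p : ({i // q i} → ℝ) × ({i // ¬ q i} → ℝ) => (∑ i, p.1 i - s, p.2) := by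
      fun_prop
    exact this hS
  have h1 : remainder n (k + 1) s t
      = (MeasurableEquiv.piEquivPiSubtypeProd (fun _ => ℝ) q) ⁻¹' T := by
    ext x
    have ha : (∀ i, 0 ≤ x i) ↔ (∀ i : {i // q i}, 0 ≤ x i) ∧ ∀ i : {i // ¬ q i}, 0 ≤ x i := by
      refine ⟨fun h => ⟨fun i => h i, fun i => h i⟩, fun h i => ?_⟩
      by_cases hi : q i
      · exact h.1 ⟨i, hi⟩
      · exact h.2 ⟨i, hi⟩
    change ((∀ i, 0 ≤ x i) ∧ 2 * (s + t) ≤ 2 * uSum (k + 1) x + vSum (k + 1) x ∧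
      uSum (k + 1) x + vSum (k + 1) x < s + 2 * t) ↔
      (∀ i : {i // q i}, 0 ≤ x i) ∧ (∀ i : {i // ¬ q i}, 0 ≤ x i) ∧
      2 * t ≤ 2 * (uSum (k + 1) x - s) + vSum (k + 1) x ∧
      (uSum (k + 1) x - s) + vSum (k + 1) x < 2 * t
    rw [ha, and_assoc]
    refine and_congr_right fun _ => and_congr_right fun _ => and_congr ?_ ?_
    · constructor <;> intro <;> linarith
    · constructor <;> intro <;> linarith
  rw [h1, (volume_preserving_piEquivPiSubtypeProd (fun _ => ℝ) q).measure_preimage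
    hT.nullMeasurableSet, Measure.volume_eq_prod, Measure.prod_apply hT]
  have h2 : ∀ y : {i // q i} → ℝ, volume (Prod.mk y ⁻¹' T) =
      {y : {i // q i} → ℝ | ∀ i, 0 ≤ y i}.indicator
        (fun y => volume (Prod.mk (∑ i, y i - s) ⁻¹' S)) y := by
    intro y
    by_cases hy : ∀ i, 0 ≤ y i
    · rw [Set.indicator_of_mem (by exact hy)]
      congr 1; ext z
      exact and_iff_right hy
    · rw [Set.indicator_of_notMem (by exact hy), Set.eq_empty_of_forall_notMem (s := _ ⁻¹' T),
        measure_empty]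
      exact fun z hz => hy hz.1
  simp only [h2]
  rw [lintegral_indicator (measurableSet_nonneg _),
    lintegral_orthant k (card_lt_subtype hk) (fun u => volume (Prod.mk (u - s) ⁻¹' S))
      (hG.comp (by fun_prop)), ← lintegral_indicator measurableSet_Ici,
    ← lintegral_indicator measurableSet_Ici, ← lintegral_add_left_eq_self _ s]
  congr 1; ext w
  by_cases hw : 0 ≤ w
  · rw [Set.indicator_of_mem (Set.mem_Ici.2 hw),
      Set.indicator_of_mem (Set.mem_Ici.2 (add_nonneg hs hw))]
    simp
  · simp only [Set.indicator, add_sub_cancel_left, hG0 w (not_le.1 hw).le, mul_zero, ite_self]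

lemma volume_remainder_polynomial (n k : ℕ) (hk : k ≤ n) (t : ℝ) :
    ∃ c : ℕ → ℝ, ∀ s : ℝ, 0 ≤ s →
      (volume (remainder n k s t)).toReal = ∑ j ∈ Finset.range k, c j * s ^ j := by
  obtain _ | k := k
  · exact ⟨0, fun s hs => by simp [remainder_zero_left n hs]⟩
  obtain ⟨G, hG, h⟩ := volume_remainder_eq n k hk t
  let d : ℕ → ENNReal := fun j => ∫⁻ w in Set.Ici 0,
    ENNReal.ofReal (w ^ (k - j) * (k.choose j) / k.factorial) * G w
  have h1 : ∀ s : ℝ, 0 ≤ s → volume (remainder n (k + 1) s t)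
      = ∑ j ∈ Finset.range (k + 1), ENNReal.ofReal (s ^ j) * d j := by
    intro s hs
    have hm : ∀ j, Measurable fun w : ℝ =>
        ENNReal.ofReal (w ^ (k - j) * (k.choose j) / k.factorial) * G w := fun j =>
      (ENNReal.measurable_ofReal.comp (by fun_prop)).mul hG
    simp only [d]
    simp_rw [← fun j => lintegral_const_mul (μ := volume.restrict (Set.Ici (0 : ℝ)))
      (ENNReal.ofReal (s ^ j)) (hm j)]
    rw [← lintegral_finsetSum _ fun j _ => (hm j).const_mul _, h s hs]
    refine setLIntegral_congr_fun measurableSet_Ici fun w hw => ?_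
    have hw : 0 ≤ w := hw
    rw [add_pow, Finset.sum_div, ENNReal.ofReal_sum_of_nonneg fun j _ => by positivity,
      Finset.sum_mul]
    refine Finset.sum_congr rfl fun j _ => ?_
    rw [← mul_assoc, ← ENNReal.ofReal_mul (by positivity)]
    congr 2; ring
  -- finiteness of the coefficients is read off from the value at `s = 1`
  have hd : ∀ j ∈ Finset.range (k + 1), d j ≠ ⊤ := by
    intro j hj
    have h2 := volume_remainder_ne_top n (k + 1) 1 t
    rw [h1 1 zero_le_one] at h2
    simpa using (ENNReal.sum_ne_top.1 h2) j hj
  refine ⟨fun j => (d j).toReal, fun s hs => ?_⟩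
  rw [h1 s hs, ENNReal.toReal_sum fun j hj => ENNReal.mul_ne_top ENNReal.ofReal_ne_top (hd j hj)]
  refine Finset.sum_congr rfl fun j _ => ?_
  rw [ENNReal.toReal_mul, ENNReal.toReal_ofReal (by positivity), mul_comm]

lemma volume_compl_cornerSum {n k : ℕ} (hn : 1 ≤ n) (hk : k ≤ n) {s t : ℝ} (hs : 0 ≤ s)
    (ht : 0 ≤ t) :
    (volume (orthant n \ cornerSum n k s t)).toReal
      = 2 ^ (n - k) / n.factorial * (s + t) ^ n + (volume (remainder n k s t)).toReal := by
  have h1 : orthant n \ cornerSum n k s t =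
      {x | (∀ i, 0 ≤ x i) ∧ ∑ i : Fin n, (if (i : ℕ) < k then (2 : ℝ) else 1) * x i < 2 * (s + t)}
        ∪ remainder n k s t := by
    ext x
    simp only [sum_weighted, orthant, cornerSum, remainder, Set.mem_sdiff, Set.mem_ofPred_eq,
      Set.mem_union, one_mul, not_and, not_le]
    rcases lt_or_ge (2 * uSum k x + vSum k x) (2 * (s + t)) with h | h
    · simp only [h, not_le.2 h, false_and, and_false, or_false, implies_true, and_true]
    · simp only [h, not_lt.2 h, true_and, and_false, false_or, imp_false, not_le]
      tauto
  have h2 : Disjoint {x : Fin n → ℝ | (∀ i, 0 ≤ x i) ∧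
      ∑ i : Fin n, (if (i : ℕ) < k then (2 : ℝ) else 1) * x i < 2 * (s + t)}
      (remainder n k s t) := by
    rw [Set.disjoint_left]
    rintro x ⟨_, h⟩ ⟨_, h', _⟩
    rw [sum_weighted] at h
    linarith
  have hprod : ∏ i : Fin n, (if (i : ℕ) < k then (2 : ℝ) else 1) = 2 ^ k := by
    rw [Finset.prod_ite]
    simp [Fin.card_filter_val_lt, hk]
  have h3 := volume_weighted_simplex hn (fun i : Fin n => if (i : ℕ) < k then (2 : ℝ) else 1)
    (fun i => by split_ifs <;> norm_num) (r := 2 * (s + t)) (by positivity)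
  rw [h1, measure_union h2 (measurableSet_remainder ..), h3, hprod,
    ENNReal.toReal_add ENNReal.ofReal_ne_top (volume_remainder_ne_top n k s t),
    ENNReal.toReal_ofReal (by positivity)]
  congr 1
  obtain ⟨l, rfl⟩ := Nat.exists_eq_add_of_le hk
  rw [Nat.add_sub_cancel_left, mul_pow, pow_add]
  field_simp

/-! ### Minkowski sums -/

/-- `C_{a_1,…,a_n}` as the half-space `∑ x_i / a_i ≥ 1` of the orthant. -/
lemma Caf_eq {n : ℕ} (a : Fin n → ℝ) (ha : ∀ i, 0 < a i) :
    Caf a = {x | (∀ i, 0 ≤ x i) ∧ 1 ≤ ∑ i, (a i)⁻¹ * x i} := by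
  have hconv : Convex ℝ {x : Fin n → ℝ | (∀ i, 0 ≤ x i) ∧ 1 ≤ ∑ i, (a i)⁻¹ * x i} := by
    rintro x ⟨hx, hx1⟩ y ⟨hy, hy1⟩ p r hp hr hpr
    refine ⟨fun i => ?_, ?_⟩
    · have := hx i; have := hy i
      simp only [Pi.add_apply, Pi.smul_apply, smul_eq_mul]; positivity
    · have : ∑ i, (a i)⁻¹ * (p • x + r • y) i
          = p * ∑ i, (a i)⁻¹ * x i + r * ∑ i, (a i)⁻¹ * y i := by
        rw [Finset.mul_sum, Finset.mul_sum, ← Finset.sum_add_distrib]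
        refine Finset.sum_congr rfl fun i _ => ?_
        simp only [Pi.add_apply, Pi.smul_apply, smul_eq_mul]; ring
      rw [this]
      nlinarith
  ext x
  constructor
  · rintro ⟨y, hy, z, hz, rfl⟩
    have hy' : y ∈ {x : Fin n → ℝ | (∀ i, 0 ≤ x i) ∧ 1 ≤ ∑ i, (a i)⁻¹ * x i} := by
      refine convexHull_min ?_ hconv hy
      rintro _ ⟨i, rfl⟩
      refine ⟨fun j => ?_, ?_⟩
      · have : (0 : Fin n → ℝ) ≤ Pi.single i (a i) := Pi.single_nonneg.2 (ha i).le
        exact this j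
      · rw [Finset.sum_eq_single i]
        · simp [(ha i).ne']
        · intro j _ hj; simp [hj]
        · simp
    refine ⟨fun i => add_nonneg (hy'.1 i) (hz i), hy'.2.trans ?_⟩
    refine Finset.sum_le_sum fun i _ => mul_le_mul_of_nonneg_left ?_ (inv_pos.2 (ha i)).le
    exact le_add_of_nonneg_right (hz i)
  · rintro ⟨hx, h1⟩
    set σ := ∑ i, (a i)⁻¹ * x i with hσ
    have hσ0 : 0 < σ := by linarith
    -- the radial projection of `x` to the face `∑ x_i / a_i = 1`
    refine ⟨σ⁻¹ • x, ?_, (1 - σ⁻¹) • x, ?_, ?_⟩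
    · have h2 : σ⁻¹ • x = ∑ i, (σ⁻¹ * ((a i)⁻¹ * x i)) • (Pi.single i (a i) : Fin n → ℝ) := by
        ext j
        rw [Finset.sum_apply, Finset.sum_eq_single j]
        · simp only [Pi.smul_apply, smul_eq_mul, Pi.single_eq_same]
          have := (ha j).ne'
          field_simp
        · intro i _ hi; simp [hi.symm]
        · simp
      rw [h2]
      refine (convex_convexHull ℝ _).sum_mem (fun i _ => ?_) ?_ fun i _ =>
        subset_convexHull ℝ _ ⟨i, rfl⟩
      · have := ha i; have := hx i; positivity
      · rw [← Finset.mul_sum, ← hσ, inv_mul_cancel₀ hσ0.ne']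
    · intro i
      have : σ⁻¹ ≤ 1 := inv_le_one_of_one_le₀ h1
      exact mul_nonneg (by linarith) (hx i)
    · simp only
      rw [← add_smul]; simp

lemma Caf_mixed {n : ℕ} (k : ℕ) :
    Caf (fun j : Fin n => if (j : ℕ) < k then (1 : ℝ) else 2) = cornerSum n k 1 0 := by
  rw [Caf_eq _ fun i => by split_ifs <;> norm_num]
  ext x
  have : ∀ i : Fin n, (if (i : ℕ) < k then (1 : ℝ) else 2)⁻¹
      = if (i : ℕ) < k then (1 : ℝ) else 2⁻¹ := fun i => by split_ifs <;> simp
  simp only [this, sum_weighted, cornerSum, Set.mem_ofPred_eq]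
  refine and_congr_right fun hx => ?_
  have := uSum_nonneg k hx
  have := vSum_nonneg k hx
  constructor
  · intro; constructor <;> linarith
  · rintro ⟨_, _⟩; linarith

lemma Caf_two {n : ℕ} (k : ℕ) :
    Caf (fun _ : Fin n => (2 : ℝ)) = cornerSum n k 0 1 := by
  rw [Caf_eq _ fun i => by norm_num]
  ext x
  rw [Set.mem_ofPred_eq, ← Finset.mul_sum]
  simp only [sum_eq_uSum_add_vSum k, cornerSum, Set.mem_ofPred_eq]
  refine and_congr_right fun hx => ?_
  have := uSum_nonneg k hx
  have := vSum_nonneg k hx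
  constructor
  · intro; constructor <;> linarith
  · rintro ⟨_, _⟩; linarith

/-- A decomposition of the pair `(u, v)` of block sums lifts to the vector, by rescaling each of its
two blocks. -/
lemma exists_le_with_sums {n : ℕ} (k : ℕ) {x : Fin n → ℝ} (hx : ∀ i, 0 ≤ x i) {u v : ℝ}
    (hu : 0 ≤ u) (hv : 0 ≤ v) (hux : u ≤ uSum k x) (hvx : v ≤ vSum k x) :
    ∃ y z : Fin n → ℝ, (∀ i, 0 ≤ y i) ∧ (∀ i, 0 ≤ z i) ∧ z + y = x ∧
      uSum k y = u ∧ vSum k y = v ∧ uSum k z = uSum k x - u ∧ vSum k z = vSum k x - v := by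
  let y : Fin n → ℝ := fun i => (if (i : ℕ) < k then u / uSum k x else v / vSum k x) * x i
  have h1 : u / uSum k x ≤ 1 := div_le_one_of_le₀ hux (uSum_nonneg k hx)
  have h2 : v / vSum k x ≤ 1 := div_le_one_of_le₀ hvx (vSum_nonneg k hx)
  have hy : ∀ i, 0 ≤ y i := fun i => by
    have := uSum_nonneg k hx
    have := vSum_nonneg k hx
    have := hx i
    simp only [y]; split_ifs <;> positivity
  have hyx : ∀ i, y i ≤ x i := fun i => by
    refine mul_le_of_le_one_left (hx i) ?_
    split_ifs <;> assumption
  -- if a block sum of `x` vanishes then so does the prescribed part, and `0 / 0 = 0` is harmless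
  have hyu : uSum k y = u := by
    have : uSum k y = u / uSum k x * uSum k x := by
      conv_rhs => rw [uSum, Finset.mul_sum]
      exact Finset.sum_congr rfl fun i _ => by simp only [y]; rw [if_pos i.2]; rfl
    rw [this]
    exact div_mul_cancel_of_imp fun h => by linarith
  have hyv : vSum k y = v := by
    have : vSum k y = v / vSum k x * vSum k x := by
      conv_rhs => rw [vSum, Finset.mul_sum]
      exact Finset.sum_congr rfl fun i _ => by simp only [y]; rw [if_neg i.2]; rfl
    rw [this]
    exact div_mul_cancel_of_imp fun h => by linarith
  refine ⟨y, x - y, hy, fun i => sub_nonneg.2 (hyx i), sub_add_cancel x y, hyu, hyv, ?_, ?_⟩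
  · rw [← hyu]; simp [uSum]
  · rw [← hyv]; simp [vSum]

lemma cornerSum_add_subset {n k : ℕ} (s t s' t' : ℝ) :
    cornerSum n k s t + cornerSum n k s' t' ⊆ cornerSum n k (s + s') (t + t') := by
  rintro _ ⟨x, ⟨hx, h1, h2⟩, y, ⟨hy, h3, h4⟩, rfl⟩
  have hu : uSum k (x + y) = uSum k x + uSum k y := Finset.sum_add_distrib
  have hv : vSum k (x + y) = vSum k x + vSum k y := Finset.sum_add_distrib
  refine ⟨fun i => add_nonneg (hx i) (hy i), ?_, ?_⟩ <;> simp only [hu, hv] <;> linarith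

lemma cornerSum_add_mixed {n k : ℕ} {s t : ℝ} (hs : 0 ≤ s) (ht : 0 ≤ t) :
    cornerSum n k s t + cornerSum n k 1 0 = cornerSum n k (s + 1) t := by
  refine subset_antisymm (by simpa using cornerSum_add_subset (n := n) (k := k) s t 1 0) ?_
  rintro x ⟨hx, h1, h2⟩
  have hu := uSum_nonneg k hx
  have hv := vSum_nonneg k hx
  -- remove as much as possible from the first block
  rcases le_total 1 (uSum k x) with h | h
  · obtain ⟨y, z, hy, hz, rfl, e1, e2, e3, e4⟩ :=
      exists_le_with_sums k hx (u := 1) (v := 0) (by norm_num) le_rfl h hv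
    exact ⟨z, ⟨hz, by linarith, by linarith⟩, y, ⟨hy, by linarith, by linarith⟩, rfl⟩
  · obtain ⟨y, z, hy, hz, rfl, e1, e2, e3, e4⟩ :=
      exists_le_with_sums k hx (u := uSum k x) (v := 2 - 2 * uSum k x) hu (by linarith) le_rfl
        (by linarith)
    exact ⟨z, ⟨hz, by linarith, by linarith⟩, y, ⟨hy, by linarith, by linarith⟩, rfl⟩

lemma cornerSum_add_two {n k : ℕ} {s t : ℝ} (hs : 0 ≤ s) (ht : 0 ≤ t) :
    cornerSum n k s t + cornerSum n k 0 1 = cornerSum n k s (t + 1) := by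
  refine subset_antisymm (by simpa using cornerSum_add_subset (n := n) (k := k) s t 0 1) ?_
  rintro x ⟨hx, h1, h2⟩
  have hu := uSum_nonneg k hx
  have hv := vSum_nonneg k hx
  -- remove as much as possible from the second block
  rcases le_total 2 (vSum k x) with h | h
  · obtain ⟨y, z, hy, hz, rfl, e1, e2, e3, e4⟩ :=
      exists_le_with_sums k hx (u := 0) (v := 2) le_rfl (by norm_num) hu h
    exact ⟨z, ⟨hz, by linarith, by linarith⟩, y, ⟨hy, by linarith, by linarith⟩, rfl⟩
  · obtain ⟨y, z, hy, hz, rfl, e1, e2, e3, e4⟩ :=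
      exists_le_with_sums k hx (u := 2 - vSum k x) (v := vSum k x) (by linarith) hv (by linarith)
        le_rfl
    exact ⟨z, ⟨hz, by linarith, by linarith⟩, y, ⟨hy, by linarith, by linarith⟩, rfl⟩

lemma sum_eq_cornerSum {n k : ℕ} (M : Finset (Fin n)) (B : Fin n → Set (Fin n → ℝ))
    (hM : ∀ i ∈ M, B i = cornerSum n k 1 0) (hM' : ∀ i ∉ M, B i = cornerSum n k 0 1)
    (I : Finset (Fin n)) (hI : I.Nonempty) :
    ∑ i ∈ I, B i = cornerSum n k (I ∩ M).card (I \ M).card := by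
  induction hI using Finset.Nonempty.cons_induction with
  | singleton i =>
    by_cases hi : i ∈ M
    · simp [hM i hi, hi, Finset.singleton_inter_of_mem, Finset.sdiff_eq_empty_iff_subset.2]
    · simp [hM' i hi, hi, Finset.singleton_inter_of_notMem, Finset.sdiff_eq_self_of_disjoint]
  | cons i I hiI hI ih =>
    rw [Finset.sum_cons, ih, add_comm, Finset.cons_eq_insert]
    by_cases hi : i ∈ M
    · rw [hM i hi, cornerSum_add_mixed (Nat.cast_nonneg _) (Nat.cast_nonneg _),
        Finset.insert_inter_of_mem hi, Finset.insert_sdiff_of_mem _ hi,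
        Finset.card_insert_of_notMem (by simp [hiI])]
      push_cast; rfl
    · rw [hM' i hi, cornerSum_add_two (Nat.cast_nonneg _) (Nat.cast_nonneg _),
        Finset.insert_inter_of_notMem hi, Finset.insert_sdiff_of_notMem _ hi,
        Finset.card_insert_of_notMem (by simp [hiI])]
      push_cast; rfl

/-! ### The alternating sum -/

theorem stmt_16 {n : ℕ} (hn : 1 ≤ n) (m : ℕ) (hm1 : 1 ≤ m) (hmn : m ≤ n)
    (B : Fin n → Set (Fin n → ℝ))
    (hB : ∀ i : Fin n, B i =
      if (i : ℕ) < m then Caf (fun j => if (j : ℕ) < m - 1 then (1 : ℝ) else 2)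
      else Caf (fun _ => (2 : ℝ))) :
    MV B = 2 ^ (n - m + 1) := by
  obtain ⟨k, rfl⟩ : ∃ k, m = k + 1 := ⟨m - 1, by omega⟩
  rw [Nat.add_sub_cancel] at hB
  let M : Finset (Fin n) := Finset.univ.filter fun i => (i : ℕ) < k + 1
  have hMcard : M.card = k + 1 := by
    simp only [M]; rw [Fin.card_filter_val_lt, min_eq_right hmn]
  have hsum := sum_eq_cornerSum (k := k) M B
    (fun i hi => by rw [hB, if_pos (by simpa [M] using hi), Caf_mixed])
    (fun i hi => by rw [hB, if_neg (by simpa [M] using hi), Caf_two k])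
  choose c hc using fun t : ℝ => volume_remainder_polynomial n k (by omega) t
  have hvol : ∀ I : Finset (Fin n),
      (volume (orthant n \ cornerSum n k (I ∩ M).card (I \ M).card)).toReal
      = 2 ^ (n - k) / n.factorial * (I.card : ℝ) ^ n
        + ∑ j ∈ Finset.range k, c (I \ M).card j * ((I ∩ M).card : ℝ) ^ j := by
    intro I
    rw [volume_compl_cornerSum hn (by omega) (Nat.cast_nonneg _) (Nat.cast_nonneg _),
      hc _ _ (Nat.cast_nonneg _), ← Nat.cast_add, Finset.card_inter_add_card_sdiff]
  -- the empty set may be included, since its term is the volume of the empty set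
  have h0 : (volume (orthant n \ cornerSum n k ((∅ : Finset (Fin n)) ∩ M).card
      ((∅ : Finset (Fin n)) \ M).card)).toReal = 0 := by
    have : orthant n \ cornerSum n k ((∅ : Finset (Fin n)) ∩ M).card
      ((∅ : Finset (Fin n)) \ M).card = ∅ := by
      rw [Set.sdiff_eq_empty]
      intro x hx
      have := uSum_nonneg k hx
      have := vSum_nonneg k hx
      refine ⟨hx, ?_, ?_⟩ <;> simp <;> linarith
    rw [this]; simp
  have h1 : MV B = ∑ I ∈ (Finset.univ : Finset (Fin n)).powerset, (-1 : ℝ) ^ (n - I.card) *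
      (volume (orthant n \ cornerSum n k (I ∩ M).card (I \ M).card)).toReal := by
    rw [MV, Finset.sum_filter]
    refine Finset.sum_congr rfl fun I _ => ?_
    split_ifs with hI
    · rw [hsum I hI]
    · rw [Finset.not_nonempty_iff_eq_empty.1 hI, h0, mul_zero]
  have h2 := sum_powerset_two_eq_zero M k (by omega) (fun t j => c t j)
  have h3 := sum_powerset_pow_card (Finset.univ : Finset (Fin n))
  rw [Fintype.card_fin] at h2
  rw [Finset.card_univ, Fintype.card_fin] at h3
  rw [h1]
  simp only [hvol, mul_add, Finset.sum_add_distrib]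
  rw [h2, add_zero]
  simp only [mul_left_comm _ (2 ^ (n - k) / (n.factorial : ℝ))]
  rw [← Finset.mul_sum, h3, div_mul_cancel₀ _ (by positivity),
    show n - k = n - (k + 1) + 1 by omega]
end
end
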